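/- arXiv:2106.11604 — 9 statements merged into one kernel-verified Lean document; each statement's English description precedes it below -/
import Mathlib

section
/- Every real polynomial is liftable with respect to the shift semigroup on L²(ℝ): for any n ∈ ℕ and real coefficients c_0, …, c_n, setting g := Σ_{k=0}^n k!·c_k·1_{[-k,-k+1]} ∈ L²(ℝ), one has Σ_{k=0}^n c_k t^k = ⟨g, exp(tA) 1_{[0,1]}⟩_{L²(ℝ)} for every real number t. In particular, the Bernstein polynomial K_n(t) = Σ_{k=0}^n κ_{n,k} t^k of a function K satisfies K_n(t) = ⟨g_n, exp(tA) 1_{[0,1]}⟩ with g_n := Σ_{k=0}^n k!·κ_{n,k}·1_{[-k,-k+1]}. -/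
open MeasureTheory

/-- The indicator function of the interval `[a, b]`, regarded as an element of `L²(ℝ)`. -/
noncomputable def ind (a b : ℝ) : Lp ℝ 2 (volume : Measure ℝ) :=
  indicatorConstLp 2 (measurableSet_Icc : MeasurableSet (Set.Icc a b))
    (by rw [Real.volume_Icc]; exact ENNReal.ofReal_ne_top) (1 : ℝ)

/-- The coefficients `κ_{n,k}` of the monomial expansion of the Bernstein polynomial of order `n`
of a function `K` on `[0, T]`. -/
noncomputable def bernsteinCoeff (T : ℝ) (K : ℝ → ℝ) (n k : ℕ) : ℝ :=
  (1 / T ^ k) * ∑ i ∈ Finset.range (k + 1),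
    (-1 : ℝ) ^ (k - i) * K ((i : ℝ) * T / n) * (n.choose i) * ((n - i).choose (k - i))

theorem my_shift
    (A : Lp ℝ 2 (volume : Measure ℝ) →L[ℝ] Lp ℝ 2 (volume : Measure ℝ))
    (hA : ∀ f : Lp ℝ 2 (volume : Measure ℝ), (A f : ℝ → ℝ) =ᵐ[volume] fun x => f (x + 1))
    (a b : ℝ) : A (ind a b) = ind (a - 1) (b - 1) := by
  apply Lp.ext
  have h1 : (ind a b : ℝ → ℝ) =ᵐ[volume] (Set.Icc a b).indicator fun _ => (1:ℝ) :=
    indicatorConstLp_coeFn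
  have h2 : (ind (a-1) (b-1) : ℝ → ℝ) =ᵐ[volume]
      (Set.Icc (a-1) (b-1)).indicator fun _ => (1:ℝ) := indicatorConstLp_coeFn
  have h3 := (measurePreserving_add_right (volume : Measure ℝ) 1).quasiMeasurePreserving.ae h1
  filter_upwards [hA (ind a b), h2, h3] with x e1 e2 e3
  rw [e1, e2, e3]
  simp only [Set.indicator, Set.mem_Icc, sub_le_iff_le_add, le_sub_iff_add_le]

theorem my_pow
    (A : Lp ℝ 2 (volume : Measure ℝ) →L[ℝ] Lp ℝ 2 (volume : Measure ℝ))
    (hA : ∀ f : Lp ℝ 2 (volume : Measure ℝ), (A f : ℝ → ℝ) =ᵐ[volume] fun x => f (x + 1))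
    (k : ℕ) : (A ^ k) (ind 0 1) = ind (-(k:ℝ)) (-(k:ℝ) + 1) := by
  induction k with
  | zero => simp
  | succ k ih =>
    rw [pow_succ', ContinuousLinearMap.mul_apply, ih, my_shift A hA]
    congr 1 <;> push_cast <;> ring

theorem my_inner (k j : ℕ) :
    (inner ℝ (ind (-(k:ℝ)) (-(k:ℝ) + 1)) (ind (-(j:ℝ)) (-(j:ℝ) + 1)) : ℝ)
      = if j = k then 1 else 0 := by
  unfold ind
  rw [L2.inner_indicatorConstLp_one, setIntegral_indicatorConstLp measurableSet_Icc]
  rw [Set.Icc_inter_Icc, measureReal_def, Real.volume_Icc]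
  split_ifs with h
  · subst h; simp
  · rw [ENNReal.ofReal_of_nonpos]
    · simp
    · rw [sub_nonpos]
      rcases lt_or_gt_of_ne h with h | h
      · have : (j:ℝ) + 1 ≤ k := by exact_mod_cast h
        exact (inf_le_right.trans (by linarith)).trans le_sup_left
      · have : (k:ℝ) + 1 ≤ j := by exact_mod_cast h
        exact (inf_le_left.trans (by linarith)).trans le_sup_right

theorem my_main
    (A : Lp ℝ 2 (volume : Measure ℝ) →L[ℝ] Lp ℝ 2 (volume : Measure ℝ))
    (hA : ∀ f : Lp ℝ 2 (volume : Measure ℝ), (A f : ℝ → ℝ) =ᵐ[volume] fun x => f (x + 1))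
    (k : ℕ) (t : ℝ) :
    (inner ℝ (ind (-(k:ℝ)) (-(k:ℝ) + 1)) (NormedSpace.exp (t • A) (ind 0 1)) : ℝ)
      = ((k.factorial : ℝ))⁻¹ * t ^ k := by
  have h := NormedSpace.exp_series_hasSum_exp' (𝕂 := ℝ) (t • A)
  have h2 := (h.mapL (ContinuousLinearMap.apply ℝ _ (ind 0 1))).mapL
    (innerSL ℝ (ind (-(k:ℝ)) (-(k:ℝ) + 1)))
  have h3 := hasSum_ite_eq k (((k.factorial : ℝ))⁻¹ * t ^ k)
  refine h2.unique (Eq.mp (congrArg (fun F => HasSum F _) (funext fun j => ?_)) h3)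
  simp only [ContinuousLinearMap.apply_apply, smul_pow, smul_apply,
    my_pow A hA, innerSL_apply_apply, inner_smul_right, my_inner]
  split_ifs with h
  · subst h; simp
  · simp

/-- Every real polynomial is liftable with respect to the shift semigroup on `L²(ℝ)`: for any
`n ∈ ℕ` and real coefficients `c_0, …, c_n`, setting `g := ∑_{k=0}^n k! c_k 1_{[-k,-k+1]}`, one
has `∑_{k=0}^n c_k t^k = ⟨g, exp(tA) 1_{[0,1]}⟩` for every real `t`.  In particular, the
Bernstein polynomial `K_n(t) = ∑_{k=0}^n κ_{n,k} t^k` of a function `K` satisfies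
`K_n(t) = ⟨g_n, exp(tA) 1_{[0,1]}⟩` with `g_n := ∑_{k=0}^n k! κ_{n,k} 1_{[-k,-k+1]}`. -/
theorem polynomial_liftable
    (A : Lp ℝ 2 (volume : Measure ℝ) →L[ℝ] Lp ℝ 2 (volume : Measure ℝ))
    (hA : ∀ f : Lp ℝ 2 (volume : Measure ℝ), (A f : ℝ → ℝ) =ᵐ[volume] fun x => f (x + 1)) :
    (∀ (n : ℕ) (c : ℕ → ℝ) (t : ℝ),
      ∑ k ∈ Finset.range (n + 1), c k * t ^ k =
        (inner ℝ (∑ k ∈ Finset.range (n + 1),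
            ((k.factorial : ℝ) * c k) • ind (-(k : ℝ)) (-(k : ℝ) + 1))
          (NormedSpace.exp (t • A) (ind 0 1)) : ℝ)) ∧
    (∀ (T : ℝ) (K : ℝ → ℝ) (n : ℕ) (t : ℝ),
      ∑ k ∈ Finset.range (n + 1), bernsteinCoeff T K n k * t ^ k =
        (inner ℝ (∑ k ∈ Finset.range (n + 1),
            ((k.factorial : ℝ) * bernsteinCoeff T K n k) • ind (-(k : ℝ)) (-(k : ℝ) + 1))
          (NormedSpace.exp (t • A) (ind 0 1)) : ℝ)) := by
  have key : ∀ (n : ℕ) (c : ℕ → ℝ) (t : ℝ),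
      ∑ k ∈ Finset.range (n + 1), c k * t ^ k =
        (inner ℝ (∑ k ∈ Finset.range (n + 1),
            ((k.factorial : ℝ) * c k) • ind (-(k : ℝ)) (-(k : ℝ) + 1))
          (NormedSpace.exp (t • A) (ind 0 1)) : ℝ) := by
    intro n c t
    rw [sum_inner]
    refine Finset.sum_congr rfl fun k _ => ?_
    rw [real_inner_smul_left, my_main A hA]
    have : (k.factorial : ℝ) ≠ 0 := by exact_mod_cast k.factorial_ne_zero
    field_simp
  exact ⟨key, fun T K n t => key n (bernsteinCoeff T K n) t⟩
end

section
/- Let T > 0, β ∈ ℝ, K ∈ L²([0,T]) and v ∈ L²([0,T]). Then there exists a unique (up to almost-everywhere equality) function x ∈ L²([0,T]) satisfying the linear Volterra integral equation of the second kind x(t) = v(t) − β·∫_0^t K(t−s)·x(s) ds for almost every t ∈ [0,T]. -/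
open MeasureTheory
open scoped ENNReal

lemma volt_holder (T : ℝ) (k f : ℝ → ℝ) (hk : StronglyMeasurable k) (hf : StronglyMeasurable f)
    (t : ℝ) (ht : t ∈ Set.Icc 0 T) :
    (∫⁻ s in Set.Ioc 0 t, ‖k (t - s) * f s‖ₑ) ^ 2 ≤
      (∫⁻ s in Set.Icc 0 T, ‖k s‖ₑ ^ 2) * ∫⁻ s in Set.Ioc 0 t, ‖f s‖ₑ ^ 2 := by
  have hkm : Measurable fun s => k (t - s) := hk.measurable.comp (measurable_const.sub measurable_id)
  have h := ENNReal.lintegral_mul_le_Lp_mul_Lq (volume.restrict (Set.Ioc 0 t))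
    (Real.HolderConjugate.two_two) (f := fun s => ‖k (t - s)‖ₑ) (g := fun s => ‖f s‖ₑ)
    hkm.enorm.aemeasurable hf.measurable.enorm.aemeasurable
  have h2 : ∫⁻ s in Set.Ioc 0 t, ‖k (t - s)‖ₑ ^ 2 ≤ ∫⁻ s in Set.Icc 0 T, ‖k s‖ₑ ^ 2 := by
    rw [← lintegral_indicator measurableSet_Ioc, ← lintegral_indicator measurableSet_Icc,
      ← lintegral_sub_left_eq_self _ t]
    apply lintegral_mono
    intro s
    simp only [Set.indicator, Set.mem_Ioc, Set.mem_Icc, sub_sub_cancel]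
    split_ifs with h1 h2
    · exact le_rfl
    · exact absurd ⟨by linarith [h1.2], by linarith [h1.1, ht.2]⟩ h2
    · exact zero_le
    · exact zero_le
  have e : ∀ a : ℝ≥0∞, (a ^ (1 / 2 : ℝ)) ^ 2 = a := fun a => by
    rw [← ENNReal.rpow_natCast, ← ENNReal.rpow_mul]; norm_num
  simp only [Pi.mul_apply, ENNReal.rpow_two] at h
  simp only [enorm_mul]
  calc _ ≤ _ := pow_le_pow_left' h 2
    _ ≤ _ := by
      rw [mul_pow, e, e]
      gcongr

lemma volt_meas (k f : ℝ → ℝ) (hk : StronglyMeasurable k) (hf : StronglyMeasurable f) :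
    StronglyMeasurable fun t => ∫ s in Set.Ioc 0 t, k (t - s) * f s := by
  have : (fun t => ∫ s in Set.Ioc 0 t, k (t - s) * f s) =
      fun t => ∫ s, ({p : ℝ × ℝ | 0 < p.2 ∧ p.2 ≤ p.1}.indicator
        (fun p => k (p.1 - p.2) * f p.2)) (t, s) := by
    ext t
    rw [← integral_indicator measurableSet_Ioc]
    rfl
  rw [this]
  apply StronglyMeasurable.integral_prod_right'
  apply StronglyMeasurable.indicator
  · exact ((hk.comp_measurable (measurable_fst.sub measurable_snd))).mul
      (hf.comp_measurable measurable_snd)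
  · exact (measurableSet_lt measurable_const measurable_snd).inter
      (measurableSet_le measurable_snd measurable_fst)

lemma volt_sq (T : ℝ) {f : ℝ → ℝ} :
   eLpNorm f 2 (volume.restrict (Set.Icc 0 T)) ^ 2 = ∫⁻ s in Set.Icc 0 T, ‖f s‖ₑ ^ 2 := by
  rw [eLpNorm_eq_lintegral_rpow_enorm_toReal (by norm_num) (by norm_num)]
  rw [← ENNReal.rpow_natCast, ← ENNReal.rpow_mul]; norm_num

noncomputable abbrev VL (T : ℝ) := Lp ℝ 2 (volume.restrict (Set.Icc (0 : ℝ) T))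

lemma volt_fin (T : ℝ) (x : VL T) : ∫⁻ s in Set.Icc 0 T, ‖x s‖ₑ ^ 2 < ∞ := by
  rw [← volt_sq]
  exact ENNReal.pow_lt_top (Lp.eLpNorm_lt_top x)

lemma volt_sub (T : ℝ) {t : ℝ} (ht : t ∈ Set.Icc 0 T) (g : ℝ → ℝ≥0∞) :
    ∫⁻ s in Set.Ioc 0 t, g s ≤ ∫⁻ s in Set.Icc 0 T, g s :=
  lintegral_mono_set fun _ hs => ⟨hs.1.le, hs.2.trans ht.2⟩

lemma volt_integrable (T : ℝ) (K x : VL T) (t : ℝ) (ht : t ∈ Set.Icc 0 T) :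
    IntegrableOn (fun s => K (t - s) * x s) (Set.Ioc 0 t) := by
  refine ⟨?_, ?_⟩
  · exact (((Lp.stronglyMeasurable K).comp_measurable (measurable_const.sub measurable_id)).mul
      (Lp.stronglyMeasurable x)).aestronglyMeasurable
  · have h := volt_holder T K x (Lp.stronglyMeasurable K) (Lp.stronglyMeasurable x) t ht
    have h2 := h.trans_lt (ENNReal.mul_lt_top (volt_fin T K)
      ((volt_sub T ht _).trans_lt (volt_fin T x)))
    exact (ENNReal.pow_lt_top_iff.1 h2).resolve_right (by norm_num)

lemma volt_memLp (T : ℝ) (K x : VL T) :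
    MemLp (fun t => ∫ s in Set.Ioc (0 : ℝ) t, K (t - s) * x s) 2
      (volume.restrict (Set.Icc (0 : ℝ) T)) := by
  refine ⟨(volt_meas K x (Lp.stronglyMeasurable K)
    (Lp.stronglyMeasurable x)).aestronglyMeasurable, ?_⟩
  have : eLpNorm (fun t => ∫ s in Set.Ioc (0 : ℝ) t, K (t - s) * x s) 2
      (volume.restrict (Set.Icc (0 : ℝ) T)) ^ 2 < ∞ := by
    rw [volt_sq]
    calc _ ≤ ∫⁻ t in Set.Icc 0 T, (∫⁻ s in Set.Icc 0 T, ‖K s‖ₑ ^ 2) *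
          (∫⁻ s in Set.Icc 0 T, ‖x s‖ₑ ^ 2) := by
          apply setLIntegral_mono measurable_const
          intro t ht
          calc _ ≤ _ := pow_le_pow_left' (enorm_integral_le_lintegral_enorm _) 2
            _ ≤ _ := volt_holder T K x (Lp.stronglyMeasurable K) (Lp.stronglyMeasurable x) t ht
            _ ≤ _ := mul_le_mul_right (volt_sub T ht _) _
      _ < ∞ := by
          rw [setLIntegral_const]
          exact ENNReal.mul_lt_top (ENNReal.mul_lt_top (volt_fin T K) (volt_fin T x))
            measure_Icc_lt_top
  exact (ENNReal.pow_lt_top_iff.1 this).resolve_right (by norm_num)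

noncomputable def voltPhi (T β : ℝ) (K v : VL T) (x : VL T) : VL T :=
  v - β • (volt_memLp T K x).toLp _

lemma voltPhi_ae (T β : ℝ) (K v x : VL T) :
    ∀ᵐ t ∂(volume.restrict (Set.Icc (0 : ℝ) T)),
      voltPhi T β K v x t = v t - β * ∫ s in Set.Ioc (0 : ℝ) t, K (t - s) * x s := by
  filter_upwards [Lp.coeFn_sub v (β • (volt_memLp T K x).toLp _),
    Lp.coeFn_smul β ((volt_memLp T K x).toLp _), (volt_memLp T K x).coeFn_toLp] with t h1 h2 h3
  rw [voltPhi, h1, Pi.sub_apply, h2, Pi.smul_apply, h3, smul_eq_mul]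

lemma voltPhi_diff (T β : ℝ) (K v x y : VL T) :
    ∀ᵐ t ∂(volume.restrict (Set.Icc (0 : ℝ) T)),
      ‖voltPhi T β K v x t - voltPhi T β K v y t‖ₑ ^ 2 ≤
      (‖β‖ₑ ^ 2 * (∫⁻ s in Set.Icc 0 T, ‖K s‖ₑ ^ 2)) * ∫⁻ s in Set.Ioc 0 t, ‖x s - y s‖ₑ ^ 2 := by
  filter_upwards [voltPhi_ae T β K v x, voltPhi_ae T β K v y,
    ae_restrict_mem measurableSet_Icc] with t h1 h2 ht
  have : voltPhi T β K v x t - voltPhi T β K v y t =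
      - (β * ∫ s in Set.Ioc 0 t, K (t - s) * (x s - y s)) := by
    simp only [mul_sub]
    rw [h1, h2, integral_sub (volt_integrable T K x t ht) (volt_integrable T K y t ht)]
    ring
  rw [this, enorm_neg, enorm_mul, mul_pow, mul_assoc]
  gcongr
  calc _ ≤ _ := pow_le_pow_left' (enorm_integral_le_lintegral_enorm _) 2
    _ ≤ _ := volt_holder T K (fun s => x s - y s) (Lp.stronglyMeasurable K)
      ((Lp.stronglyMeasurable x).sub (Lp.stronglyMeasurable y)) t ht

lemma volt_iter (T β : ℝ) (K v x y : VL T) (C D : ℝ) (hC : 0 ≤ C) (hD0 : 0 ≤ D)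
    (hCe : ‖β‖ₑ ^ 2 * (∫⁻ s in Set.Icc 0 T, ‖K s‖ₑ ^ 2) = ENNReal.ofReal C)
    (hD : ∫⁻ s in Set.Icc 0 T, ‖x s - y s‖ₑ ^ 2 = ENNReal.ofReal D) (n : ℕ) :
    ∀ t ∈ Set.Icc 0 T, ∫⁻ s in Set.Ioc 0 t,
      ‖(voltPhi T β K v)^[n] x s - (voltPhi T β K v)^[n] y s‖ₑ ^ 2 ≤
        ENNReal.ofReal (D * C ^ n * (t ^ n / n.factorial)) := by
  induction n with
  | zero =>
    intro t ht
    simpa [← hD] using volt_sub T ht _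
  | succ n ih =>
    intro t ht
    simp only [Function.iterate_succ_apply']
    have hsub : Set.Ioc 0 t ⊆ Set.Icc 0 T := fun _ hs => ⟨hs.1.le, hs.2.trans ht.2⟩
    calc _ ≤ ∫⁻ s in Set.Ioc 0 t, ENNReal.ofReal (C * (D * C ^ n * (s ^ n / n.factorial))) := by
          apply lintegral_mono_ae
          filter_upwards [ae_restrict_of_ae_restrict_of_subset hsub (voltPhi_diff T β K v
            ((voltPhi T β K v)^[n] x) ((voltPhi T β K v)^[n] y)),
            ae_restrict_mem measurableSet_Ioc] with s h1 hs
          refine h1.trans ?_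
          rw [hCe, ENNReal.ofReal_mul hC]
          gcongr
          exact ih s (hsub hs)
      _ = _ := by
          rw [← ofReal_integral_eq_lintegral_ofReal]
          · congr 1
            rw [← intervalIntegral.integral_of_le ht.1]
            simp only [intervalIntegral.integral_const_mul, intervalIntegral.integral_div,
              integral_pow, Nat.factorial_succ]
            push_cast
            field_simp
            simp
            ring
          · exact (Continuous.integrableOn_Icc (by fun_prop)).mono_set Set.Ioc_subset_Icc_self
          · filter_upwards [ae_restrict_mem measurableSet_Ioc] with s hs
            have := hs.1.le
            simp only [Pi.zero_apply]
            positivity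

lemma volt_dist (T : ℝ) (x y : VL T) :
    edist x y ^ 2 = ∫⁻ s in Set.Icc 0 T, ‖x s - y s‖ₑ ^ 2 := by
  rw [Lp.edist_def, volt_sq]; rfl

lemma volt_contract (T : ℝ) (hT : 0 < T) (β : ℝ) (K v : VL T) :
    ∃ n, ContractingWith (1 / 2) (voltPhi T β K v)^[n] := by
  obtain ⟨C, hC, hCe⟩ : ∃ C : ℝ, 0 ≤ C ∧
      ‖β‖ₑ ^ 2 * (∫⁻ s in Set.Icc 0 T, ‖K s‖ₑ ^ 2) = ENNReal.ofReal C :=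
    ⟨_, ENNReal.toReal_nonneg, (ENNReal.ofReal_toReal (ENNReal.mul_lt_top
      (ENNReal.pow_lt_top enorm_lt_top) (volt_fin T K)).ne).symm⟩
  obtain ⟨n, hn⟩ := ((FloorSemiring.tendsto_pow_div_factorial_atTop (C * T)).eventually
    (gt_mem_nhds (show (0 : ℝ) < 1 / 4 by norm_num))).exists
  refine ⟨n, by norm_num [← NNReal.coe_lt_coe], fun x y => ?_⟩
  have hfin : edist x y ^ 2 < ∞ := ENNReal.pow_lt_top (edist_lt_top x y)
  have h := volt_iter T β K v x y C _ hC ENNReal.toReal_nonneg hCe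
    (by rw [← volt_dist]; exact (ENNReal.ofReal_toReal hfin.ne).symm) n T ⟨hT.le, le_rfl⟩
  rw [setLIntegral_congr Ioc_ae_eq_Icc, ← volt_dist] at h
  refine (ENNReal.pow_le_pow_left_iff two_ne_zero).1 (h.trans ?_)
  calc _ ≤ ENNReal.ofReal ((edist x y ^ 2).toReal * (1 / 4)) := by
        apply ENNReal.ofReal_le_ofReal
        rw [mul_assoc]
        gcongr
        rw [← mul_div_assoc, ← mul_pow]
        exact hn.le
    _ = _ := by
        rw [ENNReal.ofReal_mul ENNReal.toReal_nonneg, ENNReal.ofReal_toReal hfin.ne, mul_pow,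
          mul_comm]
        congr 1
        rw [← ENNReal.ofReal_coe_nnreal, ← ENNReal.ofReal_pow (by positivity)]
        norm_num

theorem volterra_second_kind_existence_uniqueness
    (T : ℝ) (hT : 0 < T) (β : ℝ)
    (K v : Lp ℝ 2 (volume.restrict (Set.Icc (0 : ℝ) T))) :
    ∃! x : Lp ℝ 2 (volume.restrict (Set.Icc (0 : ℝ) T)),
      ∀ᵐ t ∂(volume.restrict (Set.Icc (0 : ℝ) T)),
        x t = v t - β * ∫ s in Set.Ioc (0 : ℝ) t, K (t - s) * x s := by
  obtain ⟨n, hn⟩ := volt_contract T hT β K v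
  refine ⟨hn.fixedPoint _, ?_, fun y hy => ?_⟩
  · have h := hn.isFixedPt_fixedPoint_iterate
    have h2 := voltPhi_ae T β K v (hn.fixedPoint _)
    rw [h] at h2
    exact h2
  · have : Function.IsFixedPt (voltPhi T β K v) y := by
      apply Lp.ext
      filter_upwards [hy, voltPhi_ae T β K v y] with t h1 h2
      rw [h1, h2]
    exact hn.fixedPoint_unique (this.iterate n)
end

section
/- Let H be a real Hilbert space, 𝒜 a bounded linear operator on H, g, ν ∈ H with g ≠ 0, and α, β, a₁, a₂, X₀ real numbers with a₁, a₂ > 0. Set ζ₀ := (X₀/‖g‖²)·g, Ā* z := 𝒜* z − β⟨ν,z⟩g, w(t) := −a₂·exp(−(t−T)Ā*) g, and c(t) := −∫_t^T ( β·X₀·⟨w(s),ν⟩ + (α²/(4a₁))·⟨w(s),ν⟩² ) ds for t ∈ [0,T]. Then the function v(t,z) := ⟨w(t), z⟩ + c(t) satisfies, for every t ∈ [0,T] and every z ∈ H: (i) the terminal condition v(T,z) = −a₂·⟨g, z⟩, and (ii) the Hamilton–Jacobi–Bellman identity ∂v/∂t (t,z) = −⟨𝒜 z − β⟨g,z⟩ν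 − β⟨g,ζ₀⟩ν, w(t)⟩ + (α²/(4a₁))·⟨w(t), ν⟩², where ∂v/∂t denotes the derivative of the real-valued function t ↦ v(t,z). -/
/-- The function `w(t) = −a₂ exp(−(t−T) Ā*) g`. -/
noncomputable def wHJB {H : Type*} [NormedAddCommGroup H] [InnerProductSpace ℝ H]
    [CompleteSpace H] (Abar : H →L[ℝ] H) (g : H) (a₂ T t : ℝ) : H :=
  -a₂ • NormedSpace.exp (-(t - T) • Abar) g

/-- The function `c(t) = −∫_t^T ( β X₀ ⟨w(s),ν⟩ + (α²/(4a₁)) ⟨w(s),ν⟩² ) ds`. -/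
noncomputable def cHJB {H : Type*} [NormedAddCommGroup H] [InnerProductSpace ℝ H]
    [CompleteSpace H] (Abar : H →L[ℝ] H) (g ν : H) (α β a₁ a₂ X₀ T t : ℝ) : ℝ :=
  -(∫ s in t..T, (β * X₀ * (inner ℝ (wHJB Abar g a₂ T s) ν : ℝ) +
      α ^ 2 / (4 * a₁) * (inner ℝ (wHJB Abar g a₂ T s) ν : ℝ) ^ 2))

/-- The candidate value function `v(t,z) = ⟨w(t), z⟩ + c(t)`. -/
noncomputable def vHJB {H : Type*} [NormedAddCommGroup H] [InnerProductSpace ℝ H]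
    [CompleteSpace H] (Abar : H →L[ℝ] H) (g ν : H) (α β a₁ a₂ X₀ T : ℝ) (t : ℝ) (z : H) : ℝ :=
  (inner ℝ (wHJB Abar g a₂ T t) z : ℝ) + cHJB Abar g ν α β a₁ a₂ X₀ T t

theorem wHJB_hasDerivAt {H : Type*} [NormedAddCommGroup H] [InnerProductSpace ℝ H]
    [CompleteSpace H] (Abar : H →L[ℝ] H) (g : H) (a₂ T t : ℝ) :
    HasDerivAt (fun s : ℝ => wHJB Abar g a₂ T s) (-(Abar (wHJB Abar g a₂ T t))) t := by
  have h1 := hasDerivAt_exp_smul_const' (𝕂 := ℝ) Abar (-(t - T))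
  have h2 : HasDerivAt (fun s : ℝ => -(s - T)) (-1) t := ((hasDerivAt_id t).sub_const T).neg
  have h3 := HasDerivAt.scomp t h1 h2
  have h4 := (h3.clm_apply (hasDerivAt_const t g)).const_smul (-a₂)
  unfold wHJB
  refine HasDerivAt.congr_deriv h4 ?_
  simp

/-- Let `H` be a real Hilbert space, `𝒜` a bounded operator on `H`, `g ≠ 0`, `ν ∈ H` and
`α, β, a₁, a₂, X₀ ∈ ℝ` with `a₁, a₂ > 0`.  With `ζ₀ = (X₀/‖g‖²) g`,
`Ā* z = 𝒜* z − β ⟨ν,z⟩ g`, `w(t) = −a₂ exp(−(t−T) Ā*) g` and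
`c(t) = −∫_t^T ( β X₀ ⟨w(s),ν⟩ + (α²/(4a₁)) ⟨w(s),ν⟩² ) ds`, the function
`v(t,z) = ⟨w(t), z⟩ + c(t)` satisfies the terminal condition `v(T,z) = −a₂ ⟨g,z⟩` and the
Hamilton–Jacobi–Bellman identity
`∂v/∂t (t,z) = −⟨𝒜 z − β⟨g,z⟩ν − β⟨g,ζ₀⟩ν, w(t)⟩ + (α²/(4a₁)) ⟨w(t),ν⟩²`
for all `t ∈ [0,T]` and `z ∈ H`. -/
theorem hjb_solution
    {H : Type*} [NormedAddCommGroup H] [InnerProductSpace ℝ H] [CompleteSpace H]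
    (𝒜 : H →L[ℝ] H) (g ν : H) (hg : g ≠ 0)
    (α β a₁ a₂ X₀ T : ℝ) (ha₁ : 0 < a₁) (ha₂ : 0 < a₂) (hT : 0 < T)
    (Abar : H →L[ℝ] H)
    (hAbar : ∀ z : H, Abar z = ContinuousLinearMap.adjoint 𝒜 z - (β * (inner ℝ ν z : ℝ)) • g) :
    (∀ z : H, vHJB Abar g ν α β a₁ a₂ X₀ T T z = -a₂ * (inner ℝ g z : ℝ)) ∧
      (∀ t ∈ Set.Icc (0 : ℝ) T, ∀ z : H,
        HasDerivAt (fun s : ℝ => vHJB Abar g ν α β a₁ a₂ X₀ T s z)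
          (-(inner ℝ (𝒜 z - (β * (inner ℝ g z : ℝ)) • ν
                - (β * (inner ℝ g ((X₀ / ‖g‖ ^ 2) • g) : ℝ)) • ν)
              (wHJB Abar g a₂ T t) : ℝ)
            + α ^ 2 / (4 * a₁) * (inner ℝ (wHJB Abar g a₂ T t) ν : ℝ) ^ 2) t) := by
  have hw := wHJB_hasDerivAt Abar g a₂ T
  have hwc : Continuous (fun s : ℝ => wHJB Abar g a₂ T s) :=
    continuous_iff_continuousAt.2 fun t => (hw t).continuousAt
  refine ⟨fun z => ?_, fun t _ z => ?_⟩
  · simp [vHJB, cHJB, wHJB, inner_smul_left, NormedSpace.exp_zero]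
  · have hc : Continuous (fun s : ℝ => β * X₀ * (inner ℝ (wHJB Abar g a₂ T s) ν : ℝ) +
        α ^ 2 / (4 * a₁) * (inner ℝ (wHJB Abar g a₂ T s) ν : ℝ) ^ 2) := by fun_prop
    have h1 := (intervalIntegral.integral_hasDerivAt_left (hc.intervalIntegrable t T)
      (hc.stronglyMeasurableAtFilter _ _) hc.continuousAt).neg
    have h2 := ((hw t).inner ℝ (hasDerivAt_const t z)).add h1
    refine HasDerivAt.congr_deriv h2 ?_
    have hn : ‖g‖ ^ 2 ≠ 0 := by simpa using hg
    have hX : inner ℝ g ((X₀ / ‖g‖ ^ 2) • g) = X₀ := by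
      rw [inner_smul_right, real_inner_self_eq_norm_sq]
      field_simp
    rw [hX, hAbar]
    generalize wHJB Abar g a₂ T t = w
    simp only [inner_sub_left, inner_neg_left, inner_smul_left, inner_zero_right,
      ContinuousLinearMap.adjoint_inner_left, conj_trivial]
    rw [real_inner_comm w (𝒜 z), real_inner_comm w ν]
    ring
end

section
/- Let A be the shift operator on L²(ℝ), let n ∈ ℕ, let κ_{n,0}, …, κ_{n,n} be real numbers, set g_n := Σ_{k=0}^n k!·κ_{n,k}·1_{[-k,-k+1]} ∈ L²(ℝ), let β ∈ ℝ and define the bounded operator Ā_n on L²(ℝ) by Ā_n z := A z − β·⟨g_n, z⟩·1_{[0,1]}. Define γ(0,0) := 1 and, for k ≥ 1, γ(i,k) := γ(i−1,k−1) for i = 1, …, k and γ(0,k) := Σ_{j=0}^{(k−1)∧n} (−β)·j!·κ_{n,j}·γ(j,k−1). Then for every k ∈ ℕ one has Ā_n^k 1_{[0,1]} = Σ_{i=0}^k γ(i,k)·1_{[-i,-i+1]} in L²(ℝ). -/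
open MeasureTheory

/-- The coefficients `γ(i,k)`: `γ(0,0) = 1` and, for `k ≥ 1`, `γ(i,k) = γ(i−1,k−1)` for
`i = 1, …, k` and `γ(0,k) = ∑_{j=0}^{(k−1)∧n} (−β) j! κ_{n,j} γ(j,k−1)`. -/
noncomputable def gam (β : ℝ) (n : ℕ) (κ : ℕ → ℝ) : ℕ → ℕ → ℝ
  | i, 0 => if i = 0 then 1 else 0
  | 0, k + 1 => ∑ j ∈ Finset.range (min k n + 1),
      (-β) * (j.factorial : ℝ) * κ j * gam β n κ j k
  | i + 1, k + 1 => gam β n κ i k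

theorem aux_shift (A : Lp ℝ 2 (volume : Measure ℝ) →L[ℝ] Lp ℝ 2 (volume : Measure ℝ))
    (hA : ∀ f : Lp ℝ 2 (volume : Measure ℝ), (A f : ℝ → ℝ) =ᵐ[volume] fun x => f (x + 1))
    (i : ℕ) : A (ind (-(i : ℝ)) (-(i : ℝ) + 1)) =
      ind (-((i + 1 : ℕ) : ℝ)) (-((i + 1 : ℕ) : ℝ) + 1) := by
  apply Lp.ext
  refine (hA _).trans ?_
  have h1 : ∀ a b : ℝ, (ind a b : ℝ → ℝ) =ᵐ[volume] (Set.Icc a b).indicator fun _ => (1 : ℝ) :=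
    fun a b => indicatorConstLp_coeFn
  have h2 := (measurePreserving_add_right (volume : Measure ℝ) 1).quasiMeasurePreserving.ae
    (h1 (-(i : ℝ)) (-(i : ℝ) + 1))
  filter_upwards [h2, h1 (-((i + 1 : ℕ) : ℝ)) (-((i + 1 : ℕ) : ℝ) + 1)] with x hx hy
  rw [hx, hy]
  simp only [Set.indicator, Set.mem_Icc]
  push_cast
  congr 1
  apply propext
  constructor <;> rintro ⟨h, h'⟩ <;> constructor <;> linarith

theorem aux_inner (i j : ℕ) :
    (inner ℝ (ind (-(i : ℝ)) (-(i : ℝ) + 1)) (ind (-(j : ℝ)) (-(j : ℝ) + 1)) : ℝ) =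
      if i = j then 1 else 0 := by
  have key : ∀ i j : ℕ, i < j → (volume : Measure ℝ).real
      (Set.Icc (-(i : ℝ)) (-(i : ℝ) + 1) ∩ Set.Icc (-(j : ℝ)) (-(j : ℝ) + 1)) = 0 := by
    intro i j hij
    have : (i : ℝ) + 1 ≤ j := by exact_mod_cast hij
    rw [Set.Icc_inter_Icc, Real.volume_real_Icc, max_eq_right]
    have h1 := le_max_left (-(i : ℝ)) (-(j : ℝ))
    have h2 := min_le_right (-(i : ℝ) + 1) (-(j : ℝ) + 1)
    simp only [sub_nonpos]
    exact h2.trans (by linarith [h1])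
  unfold ind
  rw [L2.inner_indicatorConstLp_indicatorConstLp _ _ (by simp) (by simp)]
  split_ifs with h
  · subst h
    simp
  · rcases lt_or_gt_of_ne h with h | h
    · simp [key i j h]
    · rw [Set.inter_comm]
      simp [key j i h]

/-- Let `A` be the shift operator on `L²(ℝ)`, `g_n := ∑_{k=0}^n k! κ_{n,k} 1_{[-k,-k+1]}` and
`Ā_n z := A z − β ⟨g_n, z⟩ 1_{[0,1]}`.  Then for every `k ∈ ℕ`,
`Ā_n^k 1_{[0,1]} = ∑_{i=0}^k γ(i,k) 1_{[-i,-i+1]}` in `L²(ℝ)`. -/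
theorem pow_rank_one_perturbed_shift_indicator
    (A : Lp ℝ 2 (volume : Measure ℝ) →L[ℝ] Lp ℝ 2 (volume : Measure ℝ))
    (hA : ∀ f : Lp ℝ 2 (volume : Measure ℝ), (A f : ℝ → ℝ) =ᵐ[volume] fun x => f (x + 1))
    (n : ℕ) (κ : ℕ → ℝ) (β : ℝ)
    (gn : Lp ℝ 2 (volume : Measure ℝ))
    (hgn : gn = ∑ k ∈ Finset.range (n + 1),
      ((k.factorial : ℝ) * κ k) • ind (-(k : ℝ)) (-(k : ℝ) + 1))
    (Abar : Lp ℝ 2 (volume : Measure ℝ) →L[ℝ] Lp ℝ 2 (volume : Measure ℝ))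
    (hAbar : ∀ z, Abar z = A z - (β * (inner ℝ gn z : ℝ)) • ind 0 1) :
    ∀ k : ℕ, (Abar ^ k) (ind 0 1) =
      ∑ i ∈ Finset.range (k + 1), gam β n κ i k • ind (-(i : ℝ)) (-(i : ℝ) + 1) := by
  intro k
  induction k with
  | zero => simp [gam]
  | succ k ih =>
    rw [pow_succ', mul_apply_eq_comp, ih, hAbar, map_sum,
      Finset.sum_range_succ' _ (k + 1)]
    simp only [map_smul, aux_shift A hA, gam]
    rw [sub_eq_add_neg, ← neg_smul]
    congr 1
    simp only [Nat.cast_zero, neg_zero, zero_add]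
    congr 1
    simp only [hgn, sum_inner, inner_sum, real_inner_smul_left, real_inner_smul_right, aux_inner]
    simp only [mul_ite, mul_one, mul_zero, Finset.sum_ite_eq']
    rw [← neg_mul, Finset.mul_sum]
    have hr : Finset.range (min k n + 1) =
        (Finset.range (k + 1)).filter (fun j => j ∈ Finset.range (n + 1)) := by
      ext j
      simp only [Finset.mem_range, Finset.mem_filter]
      omega
    rw [hr, Finset.sum_filter]
    refine Finset.sum_congr rfl fun j _ => ?_
    split_ifs <;> ring
end

section
/- For every real λ ≥ 0 and every natural number M with M ≥ λ, the Poisson tail satisfies e^{−λ}·Σ_{k=M+1}^∞ λ^k/k! ≤ 1 − e^{−λ/(M+1)}; equivalently, Σ_{k=M+1}^∞ λ^k/k! ≤ e^{λ}·(1 − e^{−λ/(M+1)}). -/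
noncomputable def ptG (M : ℕ) (t : ℝ) : ℝ :=
  Real.exp (-t) * ∑ k ∈ Finset.range (M + 1), t ^ k / (k.factorial : ℝ)

noncomputable def ptf (M : ℕ) (t : ℝ) : ℝ := Real.exp (-t) * (t ^ M / (M.factorial : ℝ))

theorem ptG_deriv (M : ℕ) (t : ℝ) : HasDerivAt (ptG M) (-ptf M t) t := by
  have he : HasDerivAt (fun t : ℝ => Real.exp (-t)) (-Real.exp (-t)) t := by
    simpa using (hasDerivAt_neg t).exp
  induction M with
  | zero =>
    have h : ptG 0 = fun t : ℝ => Real.exp (-t) := by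
      funext t; simp [ptG]
    rw [h]
    simpa [ptf] using he
  | succ n ih =>
    have h : ptG (n + 1) = fun t : ℝ => ptG n t + Real.exp (-t) * (t ^ (n + 1) / ((n + 1).factorial : ℝ)) := by
      funext t; simp only [ptG]; rw [Finset.sum_range_succ _ (n + 1), mul_add]
    rw [h]
    have h2 := ih.add (he.mul ((hasDerivAt_pow (n + 1) t).div_const ((n + 1).factorial : ℝ)))
    refine h2.congr_deriv ?_
    have h3 : (n.factorial : ℝ) ≠ 0 := by positivity
    have h4 : (n : ℝ) + 1 ≠ 0 := by positivity
    simp only [ptf, Nat.factorial_succ]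
    push_cast
    field_simp
    ring

theorem pt_pow (M : ℕ) (hM : 1 ≤ M) (a b : ℝ) (ha : 0 ≤ a)
    (h : a ≤ b * Real.exp (-(b - a) / M)) : ptf M a ≤ ptf M b := by
  have hM' : (0 : ℝ) < M := by exact_mod_cast hM
  have h1 := pow_le_pow_left₀ ha h M
  rw [mul_pow, ← Real.exp_nat_mul] at h1
  have h2 : (M : ℝ) * (-(b - a) / M) = -(b - a) := by field_simp
  rw [h2] at h1
  have h3 : Real.exp (-a) * a ^ M ≤ Real.exp (-b) * b ^ M := by
    calc Real.exp (-a) * a ^ M ≤ Real.exp (-a) * (b ^ M * Real.exp (-(b - a))) := by gcongr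
      _ = (Real.exp (-a) * Real.exp (-(b - a))) * b ^ M := by ring
      _ = _ := by rw [← Real.exp_add]; congr 2; ring
  simp only [ptf, ← mul_div_assoc]
  gcongr

theorem pt_exp (u : ℝ) (hu : 0 ≤ u) : (1 - u) * Real.exp u ≤ (1 + u) * Real.exp (-u) := by
  have hd : ∀ x : ℝ, HasDerivAt (fun x : ℝ => (1 + x) * Real.exp (-x) - (1 - x) * Real.exp x)
      (x * (Real.exp x - Real.exp (-x))) x := by
    intro x
    have h1 := ((hasDerivAt_id x).const_add 1).mul (hasDerivAt_neg x).exp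
    have h2 := ((hasDerivAt_id x).const_sub 1).mul (Real.hasDerivAt_exp x)
    refine (h1.sub h2).congr_deriv ?_
    simp only [id]
    ring
  have hm : MonotoneOn (fun x : ℝ => (1 + x) * Real.exp (-x) - (1 - x) * Real.exp x) (Set.Ici 0) := by
    apply monotoneOn_of_deriv_nonneg (convex_Ici 0)
    · exact fun x _ => (hd x).continuousAt.continuousWithinAt
    · exact fun x _ => (hd x).differentiableAt.differentiableWithinAt
    · intro x hx
      rw [interior_Ici] at hx
      have hx' : 0 < x := hx
      rw [(hd x).deriv]
      apply mul_nonneg hx'.le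
      rw [sub_nonneg]
      apply Real.exp_le_exp.2
      linarith
  have := hm (Set.mem_Ici.2 le_rfl) (Set.mem_Ici.2 hu) hu
  simp at this
  linarith

theorem pt_half (M : ℕ) (hM : 1 ≤ M) : 1 / 2 ≤ ptG M M := by
  have hM' : (0 : ℝ) < M := by exact_mod_cast hM
  have hd : ∀ s : ℝ, HasDerivAt (fun s : ℝ => ptG M (M + s) + ptG M (M - s))
      (-ptf M (M + s) + ptf M (M - s)) s := by
    intro s
    have h1 := (ptG_deriv M (M + s)).comp_const_add (M : ℝ) s
    have h2 := (ptG_deriv M (M - s)).comp_const_sub (M : ℝ) s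
    refine (h1.add h2).congr_deriv ?_
    ring
  have hm : AntitoneOn (fun s : ℝ => ptG M (M + s) + ptG M (M - s)) (Set.Icc 0 (M : ℝ)) := by
    apply antitoneOn_of_deriv_nonpos (convex_Icc _ _)
    · exact fun x _ => (hd x).continuousAt.continuousWithinAt
    · exact fun x _ => (hd x).differentiableAt.differentiableWithinAt
    · intro x hx
      rw [interior_Icc] at hx
      obtain ⟨h0, h1⟩ := hx
      rw [(hd x).deriv]
      have : ptf M (M - x) ≤ ptf M (M + x) := by
        apply pt_pow M hM _ _ (by linarith)
        have h := pt_exp (x / M) (by positivity)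
        have e : -((M : ℝ) + x - (M - x)) / M = -(x / M) + -(x / M) := by ring
        rw [e, Real.exp_add]
        have h2 : ((M : ℝ) - x) * Real.exp (x / M) ≤ (M + x) * Real.exp (-(x / M)) := by
          have := mul_le_mul_of_nonneg_left h hM'.le
          rw [← mul_assoc, ← mul_assoc] at this
          have e1 : (M : ℝ) * (1 - x / M) = M - x := by field_simp
          have e2 : (M : ℝ) * (1 + x / M) = M + x := by field_simp
          rwa [e1, e2] at this
        have h3 := mul_le_mul_of_nonneg_right h2 (Real.exp_pos (-(x / M))).le
        rw [mul_assoc, ← Real.exp_add, add_neg_cancel, Real.exp_zero, mul_one] at h3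
        linarith
      linarith
  have h := hm (Set.left_mem_Icc.2 hM'.le) (Set.right_mem_Icc.2 hM'.le) hM'.le
  simp only [add_zero, sub_zero, sub_self] at h
  have h0 : ptG M 0 = 1 := by
    simp [ptG, Finset.sum_range_succ']
  have h1 : 0 ≤ ptG M (M + M) := by
    unfold ptG; positivity
  linarith

theorem pt_end (M : ℕ) (hM : 1 ≤ M) : Real.exp (-(M : ℝ) / (M + 1)) ≤ ptG M M := by
  have key : ∀ x : ℝ, Real.exp (-x) ≤ 1 / (1 + x + x ^ 2 / 2) ∨ x < 0 := by
    intro x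
    by_cases hx : x < 0
    · exact Or.inr hx
    · left
      push Not at hx
      rw [Real.exp_neg, ← one_div]
      exact one_div_le_one_div_of_le (by positivity) (Real.quadratic_le_exp_of_nonneg hx)
  have hb := Real.exp_one_lt_d9
  rcases Nat.lt_or_ge M 3 with h | h
  · interval_cases M
    · have e : Real.exp (-((1 : ℕ) : ℝ) / ((1 : ℕ) + 1)) = Real.exp (-1) * Real.exp (1 / 2) := by
        rw [← Real.exp_add]; norm_num
      rw [e]
      simp only [ptG]
      gcongr
      norm_num [Finset.sum_range_succ]
      have : Real.exp (1/2) ^ 2 = Real.exp 1 := by rw [← Real.exp_nat_mul]; norm_num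
      norm_num at this
      nlinarith [Real.exp_pos (1/2 : ℝ)]
    · have e : Real.exp (-((2 : ℕ) : ℝ) / ((2 : ℕ) + 1)) = Real.exp (-2) * Real.exp (4 / 3) := by
        rw [← Real.exp_add]; norm_num
      rw [e]
      simp only [ptG]
      push_cast
      gcongr
      norm_num [Finset.sum_range_succ, Nat.factorial]
      have h3 : Real.exp (4/3) ^ 3 = Real.exp 1 ^ 4 := by
        rw [← Real.exp_nat_mul, ← Real.exp_nat_mul]; norm_num
      have h4 : Real.exp 1 ^ 4 ≤ 3 ^ 4 := by gcongr; linarith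
      apply le_of_pow_le_pow_left₀ (n := 3) (by norm_num) (by norm_num)
      rw [h3]; linarith
  · refine le_trans ?_ (pt_half M hM)
    have h' : (3 : ℝ) ≤ M := by exact_mod_cast h
    have h1 : Real.exp (-(M : ℝ) / (M + 1)) ≤ Real.exp (-(3 / 4)) := by
      apply Real.exp_le_exp.2
      rw [div_le_iff₀ (by positivity)]
      linarith
    rcases key (3 / 4) with k | k
    · norm_num at k; linarith
    · norm_num at k

theorem pt_main (M : ℕ) (lam : ℝ) (hlam : 0 ≤ lam) (hM : lam ≤ M) :
    Real.exp (-lam / (M + 1)) ≤ ptG M lam := by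
  have h0 : ptG M 0 = 1 := by
    simp [ptG, Finset.sum_range_succ']
  rcases Nat.eq_zero_or_pos M with rfl | hpos
  · have : lam = 0 := le_antisymm (by simpa using hM) hlam
    subst this
    rw [h0]; simp
  have hM' : (0 : ℝ) < M := by exact_mod_cast hpos
  have hc : ConcaveOn ℝ (Set.Icc 0 (M : ℝ)) (ptG M) := by
    apply AntitoneOn.concaveOn_of_deriv (convex_Icc _ _)
    · exact fun x _ => (ptG_deriv M x).continuousAt.continuousWithinAt
    · exact fun x _ => (ptG_deriv M x).differentiableAt.differentiableWithinAt
    · intro a ha b hb hab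
      rw [interior_Icc] at ha hb
      obtain ⟨ha0, ha1⟩ := ha
      obtain ⟨hb0, hb1⟩ := hb
      rw [(ptG_deriv M a).deriv, (ptG_deriv M b).deriv, neg_le_neg_iff]
      apply pt_pow M hpos _ _ ha0.le
      have h1 := Real.add_one_le_exp (-(b - a) / M)
      have h2 := mul_le_mul_of_nonneg_left h1 hb0.le
      refine le_trans ?_ h2
      have h3 : b * (-(b - a) / M + 1) - a = (b - a) * (M - b) / M := by field_simp; ring
      have h4 : 0 ≤ (b - a) * (M - b) / M :=
        div_nonneg (mul_nonneg (by linarith) (by linarith)) hM'.le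
      linarith
  have ht0 : 0 ≤ lam / M := by positivity
  have ht1 : 0 ≤ 1 - lam / M := by
    rw [sub_nonneg, div_le_one hM']; exact hM
  have hs : (1 - lam / M) + lam / M = 1 := by ring
  have c1 := hc.2 (Set.left_mem_Icc.2 hM'.le) (Set.right_mem_Icc.2 hM'.le) ht1 ht0 hs
  have c2 := convexOn_exp.2 (Set.mem_univ 0) (Set.mem_univ (-(M : ℝ) / (M + 1))) ht1 ht0 hs
  simp only [smul_eq_mul, mul_zero, zero_add, h0, Real.exp_zero] at c1 c2
  have e1 : lam / M * (M : ℝ) = lam := by field_simp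
  have e2 : lam / M * (-(M : ℝ) / (M + 1)) = -lam / (M + 1) := by field_simp
  rw [e1] at c1
  rw [e2] at c2
  have := mul_le_mul_of_nonneg_left (pt_end M hpos) ht0
  linarith

/-- For every real `λ ≥ 0` and every natural `M ≥ λ`, the Poisson tail satisfies
`e^{−λ} ∑_{k=M+1}^∞ λ^k/k! ≤ 1 − e^{−λ/(M+1)}`; equivalently,
`∑_{k=M+1}^∞ λ^k/k! ≤ e^{λ} (1 − e^{−λ/(M+1)})`. -/
theorem poisson_tail_bound (lam : ℝ) (hlam : 0 ≤ lam) (M : ℕ) (hM : lam ≤ M) :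
    Real.exp (-lam) * (∑' k : ℕ, lam ^ (M + 1 + k) / ((M + 1 + k).factorial : ℝ)) ≤
        1 - Real.exp (-lam / (M + 1)) ∧
      (∑' k : ℕ, lam ^ (M + 1 + k) / ((M + 1 + k).factorial : ℝ)) ≤
        Real.exp lam * (1 - Real.exp (-lam / (M + 1))) := by
  have hs := (Real.summable_pow_div_factorial lam).sum_add_tsum_nat_add (M + 1)
  have he : Real.exp lam = ∑' n : ℕ, lam ^ n / (n.factorial : ℝ) := by
    rw [Real.exp_eq_exp_ℝ, NormedSpace.exp_eq_tsum_div]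
  rw [← he] at hs
  simp only [add_comm _ (M + 1)] at hs
  have hm := pt_main M lam hlam hM
  unfold ptG at hm
  have hee : Real.exp (-lam) * Real.exp lam = 1 := by rw [← Real.exp_add]; simp
  have h1 : Real.exp (-lam) * (∑' k : ℕ, lam ^ (M + 1 + k) / ((M + 1 + k).factorial : ℝ)) ≤
        1 - Real.exp (-lam / (M + 1)) := by
    rw [← hs, mul_add] at hee
    linarith
  refine ⟨h1, ?_⟩
  have h2 := mul_le_mul_of_nonneg_left h1 (Real.exp_pos lam).le
  rwa [← mul_assoc, mul_comm (Real.exp lam) (Real.exp (-lam)), hee, one_mul] at h2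
end

section
/- Let H be a real Hilbert space, B a bounded linear operator on H, ν ∈ H with ‖ν‖ = 1, g ∈ H, and s ≥ 0. If M ∈ ℕ satisfies M ≥ s·‖B‖, where ‖B‖ is the operator norm, then |⟨g, exp(sB)ν⟩ − ⟨g, Σ_{k=0}^M (s^k/k!)·B^k ν⟩| ≤ ‖g‖·e^{s‖B‖}·(1 − e^{−s‖B‖/(M+1)}). In particular, for the lifted optimal control û_n(t) := (α a₂/(2a₁))·⟨g_n, exp((T−t)Ā_n)ν⟩ and its truncation û_{n,M}(t) := (α a₂/(2a₁))·⟨g_n, Σ_{k=0}^M ((T−t)^k/k!)·Ā_n^k ν⟩, whenever M ≥ (T−t)·‖Ā_n‖ one has |û_n(t) − û_{n,M}(t)| ≤ (α a₂/(2a₁))·‖g_n‖·e^{(T−t)‖Ā_n‖}·(1 − e^{−(T−t)‖Ā_n‖/(M+1)}). -/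
noncomputable def sM (M : ℕ) (x : ℝ) : ℝ :=
  ∑ k ∈ Finset.range (M + 1), x ^ k / (k.factorial : ℝ)

lemma sM_zero (M : ℕ) : sM M 0 = 1 := by
  unfold sM
  rw [Finset.sum_range_succ']
  simp

lemma sM_nonneg (M : ℕ) {x : ℝ} (hx : 0 ≤ x) : 0 ≤ sM M x := by
  unfold sM
  positivity

lemma sM_deriv (M : ℕ) (x : ℝ) : HasDerivAt (sM M) (sM M x - x ^ M / (M.factorial : ℝ)) x := by
  induction M with
  | zero =>
    have : sM 0 = fun _ => (1 : ℝ) := by funext y; simp [sM]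
    rw [this]
    simpa using hasDerivAt_const x (1 : ℝ)
  | succ n ih =>
    have h1 : sM (n + 1) = fun y => sM n y + y ^ (n + 1) / ((n + 1).factorial : ℝ) := by
      funext y
      unfold sM
      rw [Finset.sum_range_succ _ (n + 1)]
    rw [h1]
    have h2 := ih.add ((hasDerivAt_pow (n + 1) x).div_const ((n + 1).factorial : ℝ))
    refine h2.congr_deriv ?_
    have : (n.factorial : ℝ) ≠ 0 := by positivity
    simp only [Nat.factorial_succ, Nat.add_sub_cancel]
    push_cast
    field_simp
    ring

lemma fM_deriv (M : ℕ) (c x : ℝ) : HasDerivAt (fun y => Real.exp (-(c * y)) * sM M y)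
    (Real.exp (-(c * x)) * ((1 - c) * sM M x - x ^ M / (M.factorial : ℝ))) x := by
  have h1 : HasDerivAt (fun y : ℝ => Real.exp (-(c * y))) (Real.exp (-(c * x)) * (-(c * 1))) x :=
    (((hasDerivAt_id x).const_mul c).neg).exp
  refine (h1.mul (sM_deriv M x)).congr_deriv ?_
  ring

lemma phi_nonneg {v : ℝ} (hv : 0 ≤ v) : (1 - v) * Real.exp v ≤ (1 + v) * Real.exp (-v) := by
  have hd : ∀ y : ℝ, HasDerivAt (fun v : ℝ => (1 + v) * Real.exp (-v) - (1 - v) * Real.exp v)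
      (y * (Real.exp y - Real.exp (-y))) y := by
    intro y
    have a := ((hasDerivAt_id y).const_add 1).mul ((hasDerivAt_id y).neg.exp)
    have b := ((hasDerivAt_id y).const_sub 1).mul ((hasDerivAt_id y).exp)
    refine (a.sub b).congr_deriv ?_
    simp
    ring
  have hm : MonotoneOn (fun v : ℝ => (1 + v) * Real.exp (-v) - (1 - v) * Real.exp v)
      (Set.Ici 0) := by
    apply monotoneOn_of_deriv_nonneg (convex_Ici 0)
    · exact fun y _ => (hd y).continuousAt.continuousWithinAt
    · exact fun y _ => (hd y).differentiableAt.differentiableWithinAt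
    · intro y hy
      rw [(hd y).deriv]
      rw [interior_Ici] at hy
      have hy' : 0 < y := hy
      have : Real.exp (-y) ≤ Real.exp y := Real.exp_le_exp.2 (by linarith)
      exact mul_nonneg hy'.le (by linarith)
  have := hm (Set.mem_Ici.2 le_rfl) (Set.mem_Ici.2 hv) hv
  simp at this
  linarith

lemma g_le (M : ℕ) (hM : 1 ≤ M) {u : ℝ} (hu : 0 ≤ u) (huM : u ≤ M) :
    Real.exp (-(M - u)) * (M - u) ^ M ≤ Real.exp (-(M + u)) * (M + u) ^ M := by
  have hM0 : (0 : ℝ) < M := by exact_mod_cast hM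
  have h := phi_nonneg (v := u / M) (by positivity)
  have h0 : 0 ≤ 1 - u / M := by
    rw [sub_nonneg, div_le_one hM0]; exact huM
  have h2 : ((1 - u / M) * Real.exp (u / M)) ^ M ≤ ((1 + u / M) * Real.exp (-(u / M))) ^ M :=
    pow_le_pow_left₀ (by positivity) h M
  rw [mul_pow, mul_pow, ← Real.exp_nat_mul, ← Real.exp_nat_mul] at h2
  have e1 : (M : ℝ) * (u / M) = u := by field_simp
  have e2 : (M : ℝ) * -(u / M) = -u := by field_simp
  rw [e1, e2] at h2
  have e3 : (M : ℝ) - u = M * (1 - u / M) := by field_simp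
  have e4 : (M : ℝ) + u = M * (1 + u / M) := by field_simp
  have e5 : Real.exp (-(M - u)) = Real.exp (-M) * Real.exp u := by
    rw [← Real.exp_add]; ring_nf
  have e6 : Real.exp (-(M + u)) = Real.exp (-M) * Real.exp (-u) := by
    rw [← Real.exp_add]; ring_nf
  rw [e5, e6, e3, e4, mul_pow, mul_pow]
  have := mul_le_mul_of_nonneg_left h2 (show 0 ≤ Real.exp (-(M : ℝ)) * (M : ℝ) ^ M by positivity)
  nlinarith [this]

lemma half_le (M : ℕ) (hM : 1 ≤ M) : 1 / 2 ≤ Real.exp (-(M : ℝ)) * sM M M := by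
  set F : ℝ → ℝ := fun y => Real.exp (-(1 * y)) * sM M y with hF
  have hd : ∀ u : ℝ, HasDerivAt (fun u : ℝ => F (M + u) + F (M - u))
      ((Real.exp (-(M - u)) * (M - u) ^ M - Real.exp (-(M + u)) * (M + u) ^ M)
        / (M.factorial : ℝ)) u := by
    intro u
    have a := (fM_deriv M 1 (M + u)).comp u ((hasDerivAt_id u).const_add (M : ℝ))
    have b := (fM_deriv M 1 (M - u)).comp u ((hasDerivAt_id u).const_sub (M : ℝ))
    refine (a.add b).congr_deriv ?_
    simp only [one_mul]
    ring
  have hm : AntitoneOn (fun u : ℝ => F (M + u) + F (M - u)) (Set.Icc 0 (M : ℝ)) := by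
    apply antitoneOn_of_deriv_nonpos (convex_Icc 0 _)
    · exact fun y _ => (hd y).continuousAt.continuousWithinAt
    · exact fun y _ => (hd y).differentiableAt.differentiableWithinAt
    · intro y hy
      rw [(hd y).deriv]
      rw [interior_Icc] at hy
      have := g_le M hM hy.1.le hy.2.le
      exact div_nonpos_of_nonpos_of_nonneg (by linarith) (by positivity)
  have hM0 : (0 : ℝ) ≤ M := by positivity
  have := hm (Set.left_mem_Icc.2 hM0) (Set.right_mem_Icc.2 hM0) hM0
  have h3 : 0 ≤ F (M + M) := mul_nonneg (Real.exp_pos _).le (sM_nonneg M (by positivity))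
  have h4 : F 0 = 1 := by simp [hF, sM_zero]
  have h5 : F M = Real.exp (-(M : ℝ)) * sM M M := by simp [hF]
  simp only [add_zero, sub_zero, sub_self] at this
  linarith

lemma exp_one_lt : Real.exp 1 < 2.72 := lt_trans Real.exp_one_lt_d9 (by norm_num)

lemma end_bound (M : ℕ) (hM : 1 ≤ M) :
    1 ≤ Real.exp (-((M / (M + 1) : ℝ) * M)) * sM M M := by
  have key : Real.exp ((M / (M + 1) : ℝ) * M) ≤ sM M M → 
      1 ≤ Real.exp (-((M / (M + 1) : ℝ) * M)) * sM M M := by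
    intro h
    calc (1 : ℝ) = Real.exp (-((M / (M + 1) : ℝ) * M)) * Real.exp ((M / (M + 1) : ℝ) * M) := by
          rw [← Real.exp_add]; simp
      _ ≤ _ := by gcongr
  have h1 := exp_one_lt
  have h0 := Real.exp_pos 1
  obtain rfl | rfl | h3 : M = 1 ∨ M = 2 ∨ 3 ≤ M := by omega
  · apply key
    have : sM 1 ((1 : ℕ) : ℝ) = 2 := by norm_num [sM, Finset.sum_range_succ]
    rw [this]
    calc _ ≤ Real.exp (1 : ℝ) ^ (1/2 : ℝ) := by
          rw [← Real.exp_mul]; norm_num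
      _ ≤ (4 : ℝ) ^ (1/2 : ℝ) := Real.rpow_le_rpow h0.le (by linarith) (by norm_num)
      _ = 2 := by
          rw [show (4 : ℝ) = 2 ^ (2 : ℝ) by norm_num, ← Real.rpow_mul (by norm_num)]; norm_num
  · apply key
    have : sM 2 ((2 : ℕ) : ℝ) = 5 := by norm_num [sM, Finset.sum_range_succ, Nat.factorial]
    rw [this]
    have h4 : Real.exp ((((2 : ℕ) : ℝ) / (((2 : ℕ) : ℝ) + 1)) * ((2 : ℕ) : ℝ)) ^ 3 ≤ 5 ^ 3 := by
      rw [← Real.exp_nat_mul]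
      calc _ = Real.exp 1 ^ 4 := by rw [← Real.exp_nat_mul]; norm_num
        _ ≤ 2.72 ^ 4 := by gcongr
        _ ≤ _ := by norm_num
    exact le_of_pow_le_pow_left₀ (by norm_num) (by norm_num) h4
  · have hh := half_le M hM
    have hM3 : (3 : ℝ) ≤ M := by exact_mod_cast h3
    have e : Real.exp (-((M / (M + 1) : ℝ) * M)) = Real.exp (M / (M + 1) : ℝ) * Real.exp (-(M : ℝ)) := by
      rw [← Real.exp_add]; congr 1; field_simp; ring
    have h2 : (2 : ℝ) ≤ Real.exp (M / (M + 1) : ℝ) := by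
      rw [← Real.log_le_iff_le_exp (by norm_num)]
      have := Real.log_two_lt_d9
      have : (3 / 4 : ℝ) ≤ M / (M + 1) := by
        rw [div_le_div_iff₀ (by norm_num) (by positivity)]; linarith
      linarith
    rw [e, mul_assoc]
    nlinarith

lemma ratio_mono (M : ℕ) {x y : ℝ} (hx : 0 ≤ x) (hxy : x ≤ y) :
    sM M y * x ^ M ≤ sM M x * y ^ M := by
  unfold sM
  rw [Finset.sum_mul, Finset.sum_mul]
  refine Finset.sum_le_sum fun k hk => ?_
  have hk' : k ≤ M := by simpa [Nat.lt_succ_iff] using hk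
  obtain ⟨j, rfl⟩ := Nat.exists_eq_add_of_le hk'
  have hy : 0 ≤ y := hx.trans hxy
  rw [div_mul_eq_mul_div, div_mul_eq_mul_div]
  apply div_le_div_of_nonneg_right _ (by positivity)
  rw [pow_add, pow_add]
  have : x ^ j ≤ y ^ j := pow_le_pow_left₀ hx hxy j
  calc _ = y ^ k * x ^ k * x ^ j := by ring
    _ ≤ y ^ k * x ^ k * y ^ j := by gcongr
    _ = _ := by ring

lemma main_scalar (M : ℕ) {x : ℝ} (hx : 0 ≤ x) (hxM : x ≤ M) :
    1 ≤ Real.exp (-((M / (M + 1) : ℝ) * x)) * sM M x := by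
  rcases Nat.eq_zero_or_pos M with rfl | hM
  · have : x = 0 := le_antisymm (by simpa using hxM) hx
    subst this
    simp [sM]
  set c : ℝ := M / (M + 1) with hc
  have hc1 : 1 - c = 1 / (M + 1) := by rw [hc]; field_simp; ring
  have hc0 : 0 < 1 - c := by rw [hc1]; positivity
  have hd := fM_deriv M c
  have hf : (0 : ℝ) < M.factorial := by positivity
  rcases le_or_gt (x ^ M / (M.factorial : ℝ)) ((1 - c) * sM M x) with h | h
  · have hm : MonotoneOn (fun y => Real.exp (-(c * y)) * sM M y) (Set.Icc 0 x) := by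
      apply monotoneOn_of_deriv_nonneg (convex_Icc 0 _)
      · exact fun y _ => (hd y).continuousAt.continuousWithinAt
      · exact fun y _ => (hd y).differentiableAt.differentiableWithinAt
      · intro y hy
        rw [(hd y).deriv]
        rw [interior_Icc] at hy
        apply mul_nonneg (Real.exp_pos _).le
        have hr := ratio_mono M hy.1.le hy.2.le
        have hxp : 0 < x ^ M := pow_pos (hy.1.trans hy.2) M
        have hyp : 0 < y ^ M := pow_pos hy.1 M
        rw [div_le_iff₀ hf] at h
        rw [sub_nonneg, div_le_iff₀ hf]
        have h6 := mul_le_mul_of_nonneg_left hr (mul_pos hc0 hf).le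
        have h7 := mul_le_mul_of_nonneg_left h hyp.le
        refine le_of_mul_le_mul_right ?_ hxp
        nlinarith
    have := hm (Set.left_mem_Icc.2 hx) (Set.right_mem_Icc.2 hx) hx
    simpa [sM_zero] using this
  · have hx0 : 0 < x ^ M := by
      have : 0 ≤ (1 - c) * sM M x := mul_nonneg hc0.le (sM_nonneg M hx)
      have h8 := lt_of_le_of_lt this h
      rw [lt_div_iff₀ hf] at h8
      linarith
    have hm : AntitoneOn (fun y => Real.exp (-(c * y)) * sM M y) (Set.Icc x M) := by
      apply antitoneOn_of_deriv_nonpos (convex_Icc _ _)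
      · exact fun y _ => (hd y).continuousAt.continuousWithinAt
      · exact fun y _ => (hd y).differentiableAt.differentiableWithinAt
      · intro y hy
        rw [(hd y).deriv]
        rw [interior_Icc] at hy
        apply mul_nonpos_of_nonneg_of_nonpos (Real.exp_pos _).le
        have hr := ratio_mono M hx hy.1.le
        have hyp : 0 < y ^ M := pow_pos (hx.trans_lt hy.1) M
        rw [lt_div_iff₀ hf] at h
        rw [sub_nonpos, le_div_iff₀ hf]
        have h6 := mul_le_mul_of_nonneg_left hr (mul_pos hc0 hf).le
        have h7 := mul_le_mul_of_nonneg_left h.le hyp.le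
        refine le_of_mul_le_mul_right ?_ hx0
        nlinarith
    exact (end_bound M hM).trans (hm (Set.left_mem_Icc.2 hxM) (Set.right_mem_Icc.2 hxM) hxM)

lemma scalar_tail (M : ℕ) {x : ℝ} (hx : 0 ≤ x) (hxM : x ≤ M) :
    Real.exp x - sM M x ≤ Real.exp x * (1 - Real.exp (-x / (M + 1))) := by
  have h := main_scalar M hx hxM
  have h2 := mul_le_mul_of_nonneg_left h (Real.exp_pos ((M / (M + 1) : ℝ) * x)).le
  rw [← mul_assoc, ← Real.exp_add, add_neg_cancel, Real.exp_zero, one_mul, mul_one] at h2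
  have : Real.exp x * Real.exp (-x / (M + 1)) = Real.exp ((M / (M + 1) : ℝ) * x) := by
    rw [← Real.exp_add]; congr 1; field_simp; ring
  rw [mul_sub, this]
  linarith

lemma op_tail {A : Type*} [NormedRing A] [NormedAlgebra ℝ A] [CompleteSpace A] (b : A) (M : ℕ)
    (x : ℝ) (hb : ‖b‖ = x) :
    ‖NormedSpace.exp b - ∑ k ∈ Finset.range (M + 1), ((k.factorial : ℝ)⁻¹) • b ^ k‖
      ≤ Real.exp x - sM M x := by
  have hs := NormedSpace.expSeries_summable' (𝕂 := ℝ) b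
  have hr := Real.summable_pow_div_factorial x
  have e1 : NormedSpace.exp b - ∑ k ∈ Finset.range (M + 1), ((k.factorial : ℝ)⁻¹) • b ^ k
      = ∑' k, (((k + (M + 1)).factorial : ℝ)⁻¹) • b ^ (k + (M + 1)) := by
    rw [NormedSpace.exp_eq_tsum ℝ]
    simp only
    rw [← hs.sum_add_tsum_nat_add (M + 1)]
    simp
  have e2 : Real.exp x - sM M x = ∑' k, x ^ (k + (M + 1)) / ((k + (M + 1)).factorial : ℝ) := by
    rw [Real.exp_eq_exp_ℝ, NormedSpace.exp_eq_tsum_div]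
    simp only
    rw [← hr.sum_add_tsum_nat_add (M + 1)]
    simp [sM]
  rw [e1, e2]
  apply tsum_of_norm_bounded ((summable_nat_add_iff (M + 1)).2 hr).hasSum
  intro k
  rw [norm_smul, norm_inv, div_eq_inv_mul, Real.norm_natCast]
  gcongr
  rw [← hb]
  exact norm_pow_le' b (by omega)

/-- Let `H` be a real Hilbert space, `B` a bounded operator on `H`, `ν ∈ H` with `‖ν‖ = 1`,
`g ∈ H` and `s ≥ 0`.  If `M ∈ ℕ` satisfies `M ≥ s ‖B‖`, then
`|⟨g, exp(sB) ν⟩ − ⟨g, ∑_{k=0}^M (s^k/k!) B^k ν⟩| ≤ ‖g‖ e^{s‖B‖} (1 − e^{−s‖B‖/(M+1)})`.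
In particular, for the lifted optimal control `û_n(t) = (α a₂/(2a₁)) ⟨g_n, exp((T−t)Ā_n) ν⟩`
and its truncation `û_{n,M}(t) = (α a₂/(2a₁)) ⟨g_n, ∑_{k=0}^M ((T−t)^k/k!) Ā_n^k ν⟩`, whenever
`M ≥ (T−t) ‖Ā_n‖` one has
`|û_n(t) − û_{n,M}(t)| ≤ (α a₂/(2a₁)) ‖g_n‖ e^{(T−t)‖Ā_n‖} (1 − e^{−(T−t)‖Ā_n‖/(M+1)})`. -/
theorem exp_truncation_error_bound
    {H : Type*} [NormedAddCommGroup H] [InnerProductSpace ℝ H] [CompleteSpace H]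
    (ν : H) (hν : ‖ν‖ = 1) :
    (∀ (B : H →L[ℝ] H) (g : H) (s : ℝ), 0 ≤ s → ∀ M : ℕ, s * ‖B‖ ≤ M →
      |(inner ℝ g (NormedSpace.exp (s • B) ν) : ℝ) -
          (inner ℝ g (∑ k ∈ Finset.range (M + 1),
            (s ^ k / (k.factorial : ℝ)) • ((B ^ k) ν)) : ℝ)| ≤
        ‖g‖ * Real.exp (s * ‖B‖) * (1 - Real.exp (-(s * ‖B‖) / (M + 1)))) ∧
    (∀ (An : H →L[ℝ] H) (gn : H) (α a₁ a₂ T t : ℝ),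
      0 < α → 0 < a₁ → 0 < a₂ → 0 < T → t ∈ Set.Icc (0 : ℝ) T →
      ∀ M : ℕ, (T - t) * ‖An‖ ≤ M →
      |(α * a₂ / (2 * a₁)) * (inner ℝ gn (NormedSpace.exp ((T - t) • An) ν) : ℝ) -
          (α * a₂ / (2 * a₁)) * (inner ℝ gn (∑ k ∈ Finset.range (M + 1),
            ((T - t) ^ k / (k.factorial : ℝ)) • ((An ^ k) ν)) : ℝ)| ≤
        (α * a₂ / (2 * a₁)) * ‖gn‖ * Real.exp ((T - t) * ‖An‖) *
          (1 - Real.exp (-((T - t) * ‖An‖) / (M + 1)))) := by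
  have main : ∀ (B : H →L[ℝ] H) (g : H) (s : ℝ), 0 ≤ s → ∀ M : ℕ, s * ‖B‖ ≤ M →
      |(inner ℝ g (NormedSpace.exp (s • B) ν) : ℝ) -
          (inner ℝ g (∑ k ∈ Finset.range (M + 1),
            (s ^ k / (k.factorial : ℝ)) • ((B ^ k) ν)) : ℝ)| ≤
        ‖g‖ * Real.exp (s * ‖B‖) * (1 - Real.exp (-(s * ‖B‖) / (M + 1))) := by
    intro B g s hs M hM
    have hn : ‖s • B‖ = s * ‖B‖ := by rw [norm_smul, Real.norm_of_nonneg hs]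
    have h1 := op_tail (s • B) M _ hn
    have h2 := scalar_tail M (by positivity) hM
    have e : NormedSpace.exp (s • B) ν - ∑ k ∈ Finset.range (M + 1),
        (s ^ k / (k.factorial : ℝ)) • ((B ^ k) ν) =
        (NormedSpace.exp (s • B) -
          ∑ k ∈ Finset.range (M + 1), ((k.factorial : ℝ)⁻¹) • (s • B) ^ k) ν := by
      rw [ContinuousLinearMap.sub_apply, ContinuousLinearMap.sum_apply]
      congr 1
      refine Finset.sum_congr rfl fun k _ => ?_
      rw [smul_pow, smul_smul, ContinuousLinearMap.smul_apply, div_eq_inv_mul]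
    rw [← inner_sub_right, e, mul_assoc]
    refine (abs_real_inner_le_norm _ _).trans ?_
    refine mul_le_mul_of_nonneg_left ?_ (norm_nonneg g)
    refine (ContinuousLinearMap.le_opNorm _ _).trans ?_
    rw [hν, mul_one]
    exact h1.trans h2
  refine ⟨main, ?_⟩
  intro An gn α a₁ a₂ T t hα h1 h2 hT ht M hM
  have h := main An gn (T - t) (by linarith [ht.2]) M hM
  have hc : 0 ≤ α * a₂ / (2 * a₁) := by positivity
  rw [← mul_sub, abs_mul, abs_of_nonneg hc, mul_assoc, mul_assoc, ← mul_assoc ‖gn‖]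
  exact mul_le_mul_of_nonneg_left h hc
end

section
/- Let H be a real Hilbert space, Ā_n a bounded linear operator on H, g_n ∈ H, ν ∈ H with ‖ν‖ = 1, and α, a₁, a₂, T > 0. Define û_n(t) := (α a₂/(2a₁))·⟨g_n, exp((T−t)Ā_n)ν⟩ and û_{n,M}(t) := (α a₂/(2a₁))·⟨g_n, Σ_{k=0}^M ((T−t)^k/k!)·Ā_n^k ν⟩. Then for every M ∈ ℕ with M ≥ T·‖Ā_n‖ one has sup_{t∈[0,T]} |û_n(t) − û_{n,M}(t)| ≤ (α a₂/(2a₁))·‖g_n‖·e^{T‖Ā_n‖}·(1 − e^{−T‖Ā_n‖/(M+1)}), and this bound tends to 0 as M → ∞; in particular û_{n,M} converges uniformly on [0,T] to û_n as M → ∞. -/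
/-- The lifted optimal control `û_n(t) = (α a₂/(2a₁)) ⟨g_n, exp((T−t) Ā_n) ν⟩`. -/
noncomputable def uhat {H : Type*} [NormedAddCommGroup H] [InnerProductSpace ℝ H]
    [CompleteSpace H] (An : H →L[ℝ] H) (gn ν : H) (α a₁ a₂ T : ℝ) (t : ℝ) : ℝ :=
  (α * a₂ / (2 * a₁)) * (inner ℝ gn (NormedSpace.exp ((T - t) • An) ν) : ℝ)

/-- The truncated control `û_{n,M}(t) = (α a₂/(2a₁)) ⟨g_n, ∑_{k=0}^M ((T−t)^k/k!) Ā_n^k ν⟩`. -/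
noncomputable def uhatTrunc {H : Type*} [NormedAddCommGroup H] [InnerProductSpace ℝ H]
    [CompleteSpace H] (An : H →L[ℝ] H) (gn ν : H) (α a₁ a₂ T : ℝ) (M : ℕ) (t : ℝ) : ℝ :=
  (α * a₂ / (2 * a₁)) * (inner ℝ gn (∑ k ∈ Finset.range (M + 1),
    ((T - t) ^ k / (k.factorial : ℝ)) • ((An ^ k) ν)) : ℝ)

/-- Poisson distribution function. -/
noncomputable def poisP (M : ℕ) (x : ℝ) : ℝ :=
  Real.exp (-x) * ∑ k ∈ Finset.range (M + 1), x ^ k / (k.factorial : ℝ)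

lemma poisP_succ (M : ℕ) (x : ℝ) : poisP (M + 1) x =
    poisP M x + Real.exp (-x) * (x ^ (M + 1) / ((M + 1).factorial : ℝ)) := by
  unfold poisP
  rw [Finset.sum_range_succ _ (M + 1)]; ring

lemma poisP_zero (x : ℝ) : poisP 0 x = Real.exp (-x) := by simp [poisP]

lemma poisP_deriv (M : ℕ) (x : ℝ) :
    HasDerivAt (poisP M) (-(Real.exp (-x) * (x ^ M / (M.factorial : ℝ)))) x := by
  have he : HasDerivAt (fun x : ℝ => Real.exp (-x)) (-Real.exp (-x)) x := by
    simpa using (hasDerivAt_neg x).exp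
  induction M with
  | zero =>
    have : poisP 0 = fun x : ℝ => Real.exp (-x) := funext poisP_zero
    rw [this]; simpa using he
  | succ M ih =>
    have : poisP (M + 1) = fun x => poisP M x +
        Real.exp (-x) * (x ^ (M + 1) / ((M + 1).factorial : ℝ)) := funext (poisP_succ M)
    rw [this]
    refine (ih.add (he.mul ((hasDerivAt_pow (M + 1) x).div_const ((M + 1).factorial : ℝ)))).congr_deriv ?_
    have h1 : (M.factorial : ℝ) ≠ 0 := by positivity
    rw [Nat.factorial_succ]; push_cast [Nat.add_sub_cancel]
    field_simp
    ring

lemma poisP_diag (M : ℕ) : Real.exp (-1) ≤ poisP M (M + 1) := by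
  induction M with
  | zero => simp [poisP_zero]
  | succ M ih =>
    refine ih.trans ?_
    push_cast
    set N : ℝ := (M : ℝ) + 1 with hN
    have hN0 : 0 < N := by positivity
    obtain ⟨c, hc, h⟩ := exists_hasDerivAt_eq_slope (poisP (M + 1)) _
      (show N < N + 1 by linarith)
      (fun x _ => (poisP_deriv (M + 1) x).continuousAt.continuousWithinAt)
      (fun x _ => poisP_deriv (M + 1) x)
    have h2 := poisP_succ M N
    have key : Real.exp (-c) * c ^ (M + 1) ≤ Real.exp (-N) * N ^ (M + 1) := by
      have hc0 : 0 < c := hN0.trans hc.1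
      have h3 : c / N ≤ Real.exp ((c - N) / N) := by
        have := Real.add_one_le_exp ((c - N) / N)
        have e : (c - N) / N + 1 = c / N := by field_simp; ring
        linarith
      have h4 := pow_le_pow_left₀ (by positivity) h3 (M + 1)
      rw [← Real.exp_nat_mul] at h4
      have e : ((M + 1 : ℕ) : ℝ) * ((c - N) / N) = c - N := by
        push_cast; rw [← hN]; field_simp
      rw [e, div_pow, div_le_iff₀ (by positivity)] at h4
      calc _ ≤ Real.exp (-c) * (Real.exp (c - N) * N ^ (M + 1)) := by gcongr
        _ = _ := by rw [← mul_assoc, ← Real.exp_add]; congr 2; ring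
    have key2 := div_le_div_of_nonneg_right key (show (0:ℝ) ≤ ((M + 1).factorial : ℝ) by positivity)
    rw [mul_div_assoc, mul_div_assoc] at key2
    have : N + 1 - N = 1 := by ring
    rw [this, div_one] at h
    linarith

lemma poisP_lower (M : ℕ) (x : ℝ) (hx : 0 ≤ x) (hxM : x ≤ M + 1) :
    Real.exp (-x / (M + 1)) ≤ poisP M x := by
  set N : ℝ := (M : ℝ) + 1 with hN
  have hN0 : 0 < N := by positivity
  have hd : ∀ y, HasDerivAt (fun y => poisP M y * Real.exp (y / N))
      (Real.exp (y / N) * Real.exp (-y) / N * ((∑ k ∈ Finset.range (M + 1), y ^ k / (k.factorial : ℝ))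
        - N * (y ^ M / (M.factorial : ℝ)))) y := by
    intro y
    refine ((poisP_deriv M y).mul ((hasDerivAt_id y).div_const N).exp).congr_deriv ?_
    simp only [poisP, id]
    field_simp
    ring
  have hcont : ∀ s, ContinuousOn (fun y => poisP M y * Real.exp (y / N)) s :=
    fun s y _ => (hd y).continuousAt.continuousWithinAt
  suffices h : 1 ≤ poisP M x * Real.exp (x / N) by
    rw [neg_div, Real.exp_neg, inv_le_iff_one_le_mul₀ (Real.exp_pos _)]
    exact h
  by_contra! hlt
  have h0 : poisP M 0 * Real.exp (0 / N) = 1 := by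
    simp [poisP, Finset.sum_range_succ']
  have hN1 : 1 ≤ poisP M N * Real.exp (N / N) := by
    have := mul_le_mul_of_nonneg_right (poisP_diag M) (Real.exp_pos 1).le
    rw [← Real.exp_add] at this
    rw [div_self hN0.ne']
    simpa using this
  have hx0 : 0 < x := by
    rcases hx.eq_or_lt with h | h
    · rw [← h, h0] at hlt; exact absurd hlt (lt_irrefl _)
    · exact h
  have hxN : x < N := by
    rcases hxM.eq_or_lt with h | h
    · rw [h] at hlt; linarith
    · exact h
  obtain ⟨c, hc, h1⟩ := exists_hasDerivAt_eq_slope _ _ hx0 (hcont _) (fun y _ => hd y)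
  obtain ⟨d, hdd, h2⟩ := exists_hasDerivAt_eq_slope _ _ hxN (hcont _) (fun y _ => hd y)
  have hc0 : 0 < c := hc.1
  have hcd : c < d := hc.2.trans hdd.1
  have s1 : (∑ k ∈ Finset.range (M + 1), c ^ k / (k.factorial : ℝ))
        - N * (c ^ M / (M.factorial : ℝ)) < 0 := by
    refine neg_of_mul_neg_right ?_ (show 0 ≤ Real.exp (c / N) * Real.exp (-c) / N by positivity)
    rw [h1]; apply div_neg_of_neg_of_pos <;> linarith
  have s2 : 0 < (∑ k ∈ Finset.range (M + 1), d ^ k / (k.factorial : ℝ))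
        - N * (d ^ M / (M.factorial : ℝ)) := by
    refine (mul_pos_iff_of_pos_left (show 0 < Real.exp (d / N) * Real.exp (-d) / N by positivity)).1 ?_
    rw [h2]; apply div_pos <;> linarith
  have s3 : (∑ k ∈ Finset.range (M + 1), d ^ k / (k.factorial : ℝ)) * c ^ M ≤
      (∑ k ∈ Finset.range (M + 1), c ^ k / (k.factorial : ℝ)) * d ^ M := by
    rw [Finset.sum_mul, Finset.sum_mul]
    refine Finset.sum_le_sum fun k hk => ?_
    obtain ⟨j, rfl⟩ := Nat.exists_eq_add_of_le (Nat.lt_succ_iff.1 (Finset.mem_range.1 hk))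
    rw [div_mul_eq_mul_div, div_mul_eq_mul_div]
    apply div_le_div_of_nonneg_right _ (by positivity)
    have h := pow_le_pow_left₀ hc0.le hcd.le j
    have hd0 : 0 < d := hc0.trans hcd
    rw [pow_add, pow_add]
    calc d ^ k * (c ^ k * c ^ j) = (d ^ k * c ^ k) * c ^ j := by ring
      _ ≤ (d ^ k * c ^ k) * d ^ j := by gcongr
      _ = _ := by ring
  have t1 := mul_lt_mul_of_pos_right s1 (pow_pos (hc0.trans hcd) M)
  have t2 := mul_lt_mul_of_pos_right s2 (pow_pos hc0 M)
  have e : N * (c ^ M / (M.factorial : ℝ)) * d ^ M = N * (d ^ M / (M.factorial : ℝ)) * c ^ M := by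
    ring
  rw [sub_mul, zero_mul] at t1 t2
  linarith

lemma exp_tail_norm {H : Type*} [NormedAddCommGroup H] [InnerProductSpace ℝ H] [CompleteSpace H]
    (B : H →L[ℝ] H) (M : ℕ) :
    ‖NormedSpace.exp B - ∑ k ∈ Finset.range (M + 1), ((k.factorial : ℝ)⁻¹) • B ^ k‖ ≤
      Real.exp ‖B‖ - ∑ k ∈ Finset.range (M + 1), ‖B‖ ^ k / (k.factorial : ℝ) := by
  have h1 := (hasSum_nat_add_iff' (M + 1)).2 (NormedSpace.exp_series_hasSum_exp' (𝕂 := ℝ) B)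
  have h2 := NormedSpace.exp_series_hasSum_exp' (𝕂 := ℝ) ‖B‖
  rw [← Real.exp_eq_exp_ℝ] at h2
  have h2 := (hasSum_nat_add_iff' (M + 1)).2 h2
  have e : ∀ k : ℕ, ((k.factorial : ℝ)⁻¹) • ‖B‖ ^ k = ‖B‖ ^ k / (k.factorial : ℝ) := by
    intro k; rw [smul_eq_mul]; ring
  simp only [e] at h2
  refine h1.norm_le_of_bounded h2 fun k => ?_
  rw [norm_smul, norm_inv, Real.norm_natCast, ← e, smul_eq_mul]
  gcongr
  exact norm_pow_le' _ (by omega)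

lemma exp_tail_bound {H : Type*} [NormedAddCommGroup H] [InnerProductSpace ℝ H] [CompleteSpace H]
    (B : H →L[ℝ] H) (M : ℕ) (x : ℝ) (hB : ‖B‖ ≤ x) (hx : x ≤ M) :
    ‖NormedSpace.exp B - ∑ k ∈ Finset.range (M + 1), ((k.factorial : ℝ)⁻¹) • B ^ k‖ ≤
      Real.exp x * (1 - Real.exp (-x / (M + 1))) := by
  refine (exp_tail_norm B M).trans ?_
  have h := poisP_lower M ‖B‖ (norm_nonneg _) (by linarith)
  have hN : (0 : ℝ) < M + 1 := by positivity
  have h3 : Real.exp ‖B‖ * poisP M ‖B‖ =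
      ∑ k ∈ Finset.range (M + 1), ‖B‖ ^ k / (k.factorial : ℝ) := by
    rw [poisP, ← mul_assoc, ← Real.exp_add]; simp
  rw [← h3]
  calc _ ≤ Real.exp ‖B‖ * (1 - Real.exp (-‖B‖ / (M + 1))) := by
        rw [mul_sub, mul_one]
        have := mul_le_mul_of_nonneg_left h (Real.exp_pos ‖B‖).le
        linarith
    _ ≤ _ := by
        have : Real.exp (-‖B‖ / (M + 1)) ≤ 1 := by
          rw [Real.exp_le_one_iff, neg_div]
          have : 0 ≤ ‖B‖ / (M + 1) := by positivity
          linarith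
        have : 0 ≤ 1 - Real.exp (-‖B‖ / (M + 1)) := by linarith
        gcongr

/-- For every `M ∈ ℕ` with `M ≥ T ‖Ā_n‖`,
`sup_{t∈[0,T]} |û_n(t) − û_{n,M}(t)| ≤ (α a₂/(2a₁)) ‖g_n‖ e^{T‖Ā_n‖} (1 − e^{−T‖Ā_n‖/(M+1)})`;
this bound tends to `0` as `M → ∞`, and in particular `û_{n,M}` converges uniformly on `[0,T]`
to `û_n` as `M → ∞`. -/
theorem uhat_trunc_uniform_convergence
    {H : Type*} [NormedAddCommGroup H] [InnerProductSpace ℝ H] [CompleteSpace H]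
    (An : H →L[ℝ] H) (gn ν : H) (hν : ‖ν‖ = 1)
    (α a₁ a₂ T : ℝ) (hα : 0 < α) (ha₁ : 0 < a₁) (ha₂ : 0 < a₂) (hT : 0 < T) :
    (∀ M : ℕ, T * ‖An‖ ≤ M → ∀ t ∈ Set.Icc (0 : ℝ) T,
      |uhat An gn ν α a₁ a₂ T t - uhatTrunc An gn ν α a₁ a₂ T M t| ≤
        (α * a₂ / (2 * a₁)) * ‖gn‖ * Real.exp (T * ‖An‖) *
          (1 - Real.exp (-(T * ‖An‖) / (M + 1)))) ∧
    Filter.Tendsto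
      (fun M : ℕ => (α * a₂ / (2 * a₁)) * ‖gn‖ * Real.exp (T * ‖An‖) *
        (1 - Real.exp (-(T * ‖An‖) / (M + 1)))) Filter.atTop (nhds 0) ∧
    TendstoUniformlyOn (fun M : ℕ => uhatTrunc An gn ν α a₁ a₂ T M)
      (uhat An gn ν α a₁ a₂ T) Filter.atTop (Set.Icc (0 : ℝ) T) := by
  have hC : 0 < α * a₂ / (2 * a₁) := by positivity
  have bound : ∀ M : ℕ, T * ‖An‖ ≤ M → ∀ t ∈ Set.Icc (0 : ℝ) T,
      |uhat An gn ν α a₁ a₂ T t - uhatTrunc An gn ν α a₁ a₂ T M t| ≤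
        (α * a₂ / (2 * a₁)) * ‖gn‖ * Real.exp (T * ‖An‖) *
          (1 - Real.exp (-(T * ‖An‖) / (M + 1))) := by
    intro M hM t ht
    have hB : ‖(T - t) • An‖ ≤ T * ‖An‖ := by
      rw [norm_smul, Real.norm_of_nonneg (by linarith [ht.2])]
      gcongr
      linarith [ht.1]
    have h := exp_tail_bound ((T - t) • An) M _ hB hM
    have hs : ∑ k ∈ Finset.range (M + 1), ((T - t) ^ k / (k.factorial : ℝ)) • ((An ^ k) ν) =
        (∑ k ∈ Finset.range (M + 1), ((k.factorial : ℝ)⁻¹) • ((T - t) • An) ^ k) ν := by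
      rw [sum_apply]
      refine Finset.sum_congr rfl fun k _ => ?_
      rw [smul_pow, smul_smul, smul_apply, div_eq_inv_mul]
    unfold uhat uhatTrunc
    rw [hs, ← mul_sub, ← inner_sub_right, ← sub_apply, abs_mul,
      abs_of_pos hC, mul_assoc, mul_assoc]
    refine mul_le_mul_of_nonneg_left ?_ hC.le
    refine (abs_real_inner_le_norm _ _).trans ?_
    refine mul_le_mul_of_nonneg_left ?_ (norm_nonneg _)
    refine (ContinuousLinearMap.le_opNorm _ _).trans ?_
    rw [hν, mul_one]
    exact h
  have lim : Filter.Tendsto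
      (fun M : ℕ => (α * a₂ / (2 * a₁)) * ‖gn‖ * Real.exp (T * ‖An‖) *
        (1 - Real.exp (-(T * ‖An‖) / (M + 1)))) Filter.atTop (nhds 0) := by
    have h1 : Filter.Tendsto (fun M : ℕ => -(T * ‖An‖) / ((M : ℝ) + 1)) Filter.atTop (nhds 0) :=
      Filter.Tendsto.div_atTop tendsto_const_nhds
        (Filter.tendsto_atTop_add_const_right _ _ tendsto_natCast_atTop_atTop)
    have h2 := (Real.continuous_exp.tendsto 0).comp h1
    have h3 := (h2.const_sub 1).const_mul ((α * a₂ / (2 * a₁)) * ‖gn‖ * Real.exp (T * ‖An‖))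
    simpa using h3
  refine ⟨bound, lim, ?_⟩
  rw [Metric.tendstoUniformlyOn_iff]
  intro ε hε
  filter_upwards [lim.eventually (gt_mem_nhds hε),
    tendsto_natCast_atTop_atTop.eventually_ge_atTop (T * ‖An‖)] with M h1 h2 t ht
  rw [Real.dist_eq]
  exact (bound M h2 t ht).trans_lt h1
end

section
/- Let A be the shift operator on L²(ℝ), let N ∈ ℕ, and define the bounded operator Ā on L²(ℝ) by Ā z := A z − N!·⟨1_{[-N,-N+1]}, z⟩·1_{[0,1]}. Then for every p ∈ ℕ and every q ∈ {0, 1, …, N}, Ā^{p(N+1)+q} 1_{[0,1]} = Σ_{j=0}^p (−1)^{p−j}·(N!)^{p−j}·1_{[−j(N+1)−q, −j(N+1)−q+1]} in L²(ℝ). -/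
open MeasureTheory

/-- The indicator of `[-k, -k+1]`. -/
noncomputable def eInd (k : ℕ) : Lp ℝ 2 (volume : Measure ℝ) := ind (-(k : ℝ)) (-(k : ℝ) + 1)

theorem inner_eInd (m k : ℕ) : (inner ℝ (eInd m) (eInd k) : ℝ) = if k = m then 1 else 0 := by
  have hv : ∀ a b : ℝ, volume (Set.Icc a b) ≠ ⊤ := fun a b => by
    rw [Real.volume_Icc]; exact ENNReal.ofReal_ne_top
  unfold eInd ind
  rw [L2.real_inner_indicatorConstLp_one_indicatorConstLp_one measurableSet_Icc measurableSet_Icc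
    (hv _ _) (hv _ _), Set.Icc_inter_Icc]
  rw [Real.volume_real_Icc]
  split_ifs with h
  · subst h; simp
  · rcases lt_or_gt_of_ne h with h | h
    · have h' : (k : ℝ) + 1 ≤ m := by exact_mod_cast h
      apply max_eq_right
      have h1 := min_le_left (-(m : ℝ) + 1) (-(k : ℝ) + 1)
      have h2 := le_max_right (-(m : ℝ)) (-(k : ℝ))
      linarith
    · have h' : (m : ℝ) + 1 ≤ k := by exact_mod_cast h
      apply max_eq_right
      have h1 := min_le_right (-(m : ℝ) + 1) (-(k : ℝ) + 1)
      have h2 := le_max_left (-(m : ℝ)) (-(k : ℝ))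
      linarith

theorem shift_eInd (A : Lp ℝ 2 (volume : Measure ℝ) →L[ℝ] Lp ℝ 2 (volume : Measure ℝ))
    (hA : ∀ f : Lp ℝ 2 (volume : Measure ℝ), (A f : ℝ → ℝ) =ᵐ[volume] fun x => f (x + 1))
    (k : ℕ) : A (eInd k) = eInd (k + 1) := by
  have hv : ∀ a b : ℝ, volume (Set.Icc a b) ≠ ⊤ := fun a b => by
    rw [Real.volume_Icc]; exact ENNReal.ofReal_ne_top
  apply Lp.ext
  have h1 : (eInd k : ℝ → ℝ) =ᵐ[volume] (Set.Icc (-(k : ℝ)) (-(k : ℝ) + 1)).indicator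
      fun _ => (1 : ℝ) :=
    indicatorConstLp_coeFn (hs := measurableSet_Icc) (hμs := hv _ _)
  have h2 : (eInd (k + 1) : ℝ → ℝ) =ᵐ[volume]
      (Set.Icc (-((k + 1 : ℕ) : ℝ)) (-((k + 1 : ℕ) : ℝ) + 1)).indicator
      fun _ => (1 : ℝ) :=
    indicatorConstLp_coeFn (hs := measurableSet_Icc) (hμs := hv _ _)
  have h3 := (measurePreserving_add_right (volume : Measure ℝ) 1).quasiMeasurePreserving.ae h1
  filter_upwards [hA (eInd k), h2, h3] with x a b c
  rw [a, b, c]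
  simp only [Set.indicator_apply, Set.mem_Icc]
  push_cast
  congr 1
  apply propext
  constructor <;> rintro ⟨u, v⟩ <;> constructor <;> linarith

/-- Let `A` be the shift operator on `L²(ℝ)`, `N ∈ ℕ`, and
`Ā z := A z − N! ⟨1_{[-N,-N+1]}, z⟩ 1_{[0,1]}`.  Then for every `p ∈ ℕ` and `q ∈ {0,…,N}`,
`Ā^{p(N+1)+q} 1_{[0,1]} = ∑_{j=0}^p (−1)^{p−j} (N!)^{p−j} 1_{[−j(N+1)−q, −j(N+1)−q+1]}`. -/
theorem pow_perturbed_shift_monomial_kernel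
    (A : Lp ℝ 2 (volume : Measure ℝ) →L[ℝ] Lp ℝ 2 (volume : Measure ℝ))
    (hA : ∀ f : Lp ℝ 2 (volume : Measure ℝ), (A f : ℝ → ℝ) =ᵐ[volume] fun x => f (x + 1))
    (N : ℕ)
    (Abar : Lp ℝ 2 (volume : Measure ℝ) →L[ℝ] Lp ℝ 2 (volume : Measure ℝ))
    (hAbar : ∀ z, Abar z = A z -
      ((N.factorial : ℝ) * (inner ℝ (ind (-(N : ℝ)) (-(N : ℝ) + 1)) z : ℝ)) • ind 0 1) :
    ∀ (p q : ℕ), q ≤ N →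
      (Abar ^ (p * (N + 1) + q)) (ind 0 1) =
        ∑ j ∈ Finset.range (p + 1),
          ((-1 : ℝ) ^ (p - j) * (N.factorial : ℝ) ^ (p - j)) •
            ind (-((j * (N + 1) + q : ℕ) : ℝ)) (-((j * (N + 1) + q : ℕ) : ℝ) + 1) := by
  have he0 : ind 0 1 = eInd 0 := by simp [eInd]
  have hstep : ∀ k, Abar (eInd k) =
      eInd (k + 1) - ((N.factorial : ℝ) * if k = N then 1 else 0) • eInd 0 := by
    intro k
    rw [hAbar, shift_eInd A hA, he0, ← inner_eInd N k]
    rfl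
  have hmain : ∀ p q : ℕ, q ≤ N → (Abar ^ (p * (N + 1) + q)) (eInd 0) =
      ∑ j ∈ Finset.range (p + 1),
        ((-1 : ℝ) ^ (p - j) * (N.factorial : ℝ) ^ (p - j)) • eInd (j * (N + 1) + q) := by
    intro p
    induction p with
    | zero =>
      intro q
      induction q with
      | zero => intro _; simp
      | succ q ih =>
        intro hq
        rw [← add_assoc, pow_succ', mul_apply_eq_comp, ih (by omega)]
        have : q ≠ N := by omega
        simp [hstep, this]
    | succ p ihp =>
      intro q
      induction q with
      | zero =>
        intro _
        have : (p + 1) * (N + 1) + 0 = (p * (N + 1) + N) + 1 := by ring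
        rw [this, pow_succ', mul_apply_eq_comp, ihp N le_rfl, map_sum,
          Finset.sum_range_succ' _ (p + 1)]
        simp only [map_smul, hstep, smul_sub, Finset.sum_sub_distrib]
        rw [sub_eq_add_neg]
        congr 1
        · apply Finset.sum_congr rfl
          intro j _
          rw [Nat.add_sub_add_right]
          congr 2
          ring
        · rw [Finset.sum_eq_single 0]
          · simp only [zero_mul, zero_add, if_true, mul_one, Nat.sub_zero, smul_smul, ← neg_smul]
            congr 1
            ring
          · intro j _ hj
            have : j * (N + 1) + N ≠ N := by
              have : 0 < j * (N + 1) := by positivity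
              omega
            rw [if_neg this]; simp
          · simp
      | succ q ih =>
        intro hq
        rw [← add_assoc, pow_succ', mul_apply_eq_comp, ih (by omega), map_sum]
        apply Finset.sum_congr rfl
        intro j _
        have : j * (N + 1) + q ≠ N := by
          rcases Nat.eq_zero_or_pos j with h | h
          · subst h; omega
          · have := Nat.le_mul_of_pos_left (N + 1) h
            omega
        rw [map_smul, hstep, if_neg this]
        simp [add_assoc]
  intro p q hq
  rw [he0]
  exact hmain p q hq
end

section
/- Let T > 0, h ∈ (0,1), H > 0 and let K : [0,T] → ℝ be Hölder continuous of order h with constant H, i.e. |K(t) − K(s)| ≤ H·|t−s|^h for all s, t ∈ [0,T]. Then there exists a constant C > 0, depending only on T, H, h and sup_{t∈[0,T]}|K(t)|, such that for all x, y ∈ [0,T]: ∫_0^{x∧y} (K(x−s) − K(y−s))² ds + ∫_{x∧y}^{x∨y} K(x∨y − s)² ds ≤ C·|x − y|^{2·(h ∧ 1/2)}. -/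
open MeasureTheory

/-- Let `T > 0`, `h ∈ (0,1)`, `H > 0`.  Then there is a constant `C > 0`, depending only on
`T`, `H`, `h` and (a bound `Ksup` on) `sup_{t∈[0,T]} |K(t)|`, such that for every
`h`-Hölder continuous kernel `K` with constant `H` and every `x, y ∈ [0,T]`,
`∫_0^{x∧y} (K(x−s) − K(y−s))² ds + ∫_{x∧y}^{x∨y} K(x∨y − s)² ds ≤ C |x − y|^{2(h∧1/2)}`. -/
theorem holder_kernel_increment_variance_bound
    (T hc Hc Ksup : ℝ) (hT : 0 < T) (hhc : hc ∈ Set.Ioo (0 : ℝ) 1) (hHc : 0 < Hc) :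
    ∃ C > 0, ∀ K : ℝ → ℝ,
      (∀ s ∈ Set.Icc (0 : ℝ) T, ∀ t ∈ Set.Icc (0 : ℝ) T,
        |K t - K s| ≤ Hc * |t - s| ^ hc) →
      (∀ t ∈ Set.Icc (0 : ℝ) T, |K t| ≤ Ksup) →
      ∀ x ∈ Set.Icc (0 : ℝ) T, ∀ y ∈ Set.Icc (0 : ℝ) T,
        (∫ s in Set.Ioc (0 : ℝ) (min x y), (K (x - s) - K (y - s)) ^ 2) +
            (∫ s in Set.Ioc (min x y) (max x y), (K (max x y - s)) ^ 2) ≤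
          C * |x - y| ^ (2 * min hc (1 / 2)) := by
  obtain ⟨h0, h1⟩ := hhc
  set m := min hc (1 / 2) with hm
  have hm0 : 0 < m := lt_min h0 (by norm_num)
  have hm1 : m ≤ hc := min_le_left _ _
  have hm2 : m ≤ 1 / 2 := min_le_right _ _
  refine ⟨Hc ^ 2 * T ^ (2 * hc - 2 * m) * T + Ksup ^ 2 * T ^ (1 - 2 * m), by positivity, ?_⟩
  intro K hK hS x hx y hy
  obtain ⟨hx0, hxT⟩ := hx
  obtain ⟨hy0, hyT⟩ := hy
  have hd0 : 0 ≤ |x - y| := abs_nonneg _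
  have hdT : |x - y| ≤ T := abs_le.2 ⟨by linarith, by linarith⟩
  have hmn0 : 0 ≤ min x y := le_min hx0 hy0
  have hmnT : min x y ≤ T := (min_le_left _ _).trans hxT
  have hmxT : max x y ≤ T := max_le hxT hyT
  have hmm : max x y - min x y = |x - y| := max_sub_min_eq_abs' x y
  have hp : 0 ≤ |x - y| ^ (2 * m) := Real.rpow_nonneg hd0 _
  have e1 : (|x - y| ^ hc) ^ 2 ≤ T ^ (2 * hc - 2 * m) * |x - y| ^ (2 * m) := by
    have : (|x - y| ^ hc) ^ 2 = |x - y| ^ (2 * hc - 2 * m) * |x - y| ^ (2 * m) := by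
      rw [← Real.rpow_add_of_nonneg hd0 (by linarith) (by linarith), ← Real.rpow_natCast,
        ← Real.rpow_mul hd0]
      congr 1
      push_cast
      ring
    rw [this]
    exact mul_le_mul_of_nonneg_right (Real.rpow_le_rpow hd0 hdT (by linarith)) hp
  have e2 : |x - y| ≤ T ^ (1 - 2 * m) * |x - y| ^ (2 * m) := by
    have : |x - y| = |x - y| ^ (1 - 2 * m) * |x - y| ^ (2 * m) := by
      rw [← Real.rpow_add_of_nonneg hd0 (by linarith) (by linarith), sub_add_cancel,
        Real.rpow_one]
    calc |x - y| = |x - y| ^ (1 - 2 * m) * |x - y| ^ (2 * m) := this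
      _ ≤ _ := mul_le_mul_of_nonneg_right (Real.rpow_le_rpow hd0 hdT (by linarith)) hp
  have i1 : (∫ s in Set.Ioc (0 : ℝ) (min x y), (K (x - s) - K (y - s)) ^ 2) ≤
      (Hc * |x - y| ^ hc) ^ 2 * min x y := by
    have := norm_setIntegral_le_of_norm_le_const (μ := volume) (s := Set.Ioc (0 : ℝ) (min x y))
      (f := fun s => (K (x - s) - K (y - s)) ^ 2) (C := (Hc * |x - y| ^ hc) ^ 2)
      (by simp) (by
        intro s hs
        have hsx := hs.2.trans (min_le_left _ _)
        have hsy := hs.2.trans (min_le_right _ _)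
        have hs0 := hs.1
        have := hK (y - s) ⟨by linarith, by linarith⟩ (x - s) ⟨by linarith, by linarith⟩
        rw [sub_sub_sub_cancel_right] at this
        rw [norm_pow, Real.norm_eq_abs]
        exact pow_le_pow_left₀ (abs_nonneg _) this 2)
    rw [Real.volume_real_Ioc_of_le hmn0, sub_zero] at this
    exact (Real.le_norm_self _).trans this
  have i2 : (∫ s in Set.Ioc (min x y) (max x y), (K (max x y - s)) ^ 2) ≤
      Ksup ^ 2 * |x - y| := by
    have := norm_setIntegral_le_of_norm_le_const (μ := volume)
      (s := Set.Ioc (min x y) (max x y))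
      (f := fun s => (K (max x y - s)) ^ 2) (C := Ksup ^ 2)
      (by simp) (by
        intro s hs
        have hs2 := hs.2
        have hs1 := hs.1
        have := hS (max x y - s) ⟨by linarith, by linarith⟩
        rw [norm_pow, Real.norm_eq_abs]
        exact pow_le_pow_left₀ (abs_nonneg _) this 2)
    rw [Real.volume_real_Ioc_of_le min_le_max, hmm] at this
    exact (Real.le_norm_self _).trans this
  have j1 : (Hc * |x - y| ^ hc) ^ 2 * min x y ≤
      Hc ^ 2 * (T ^ (2 * hc - 2 * m) * |x - y| ^ (2 * m)) * T := by
    rw [mul_pow]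
    gcongr
  have j2 := mul_le_mul_of_nonneg_left e2 (sq_nonneg Ksup)
  linarith
end
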